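/- Two directed graphs with d vertices given by irreducible stochastic matrices can have non-isomorphic Cuntz–Pimsner algebras in the correspondence setting, but for Arveson–Stinespring subproduct systems of a d×d irreducible stochastic matrix P, the Cuntz–Pimsner algebra satisfies O(Arv(P)) ≅ C(𝕋) ⊗ M_d(ℂ). -/

import Mathlib

/- STATEMENT 11.  While in the correspondence (graph-algebra) setting two directed graphs on
`d` vertices with irreducible stochastic adjacency matrices can have non-isomorphic
Cuntz–Pimsner algebras, for the Arveson–Stinespring subproduct system `Arv(P)` of a `d × d`
irreducible stochastic matrix `P`, Viselter's Cuntz–Pimsner algebra satisfies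
`O(Arv(P)) ≅ C(𝕋) ⊗ M_d(ℂ)`.  We realize the Toeplitz algebra `T(Arv(P))` concretely on the
Fock Hilbert space (the Fock module tensored over `ℓ^∞` with `ℓ²(d)`), define the Cuntz ideal
`J = {T : ‖T Q_{[n,∞)}‖ → 0}`, and express the isomorphism of the quotient `O(Arv(P))` with
`C(𝕋, M_d(ℂ)) = M_d(C(𝕋))` by a surjective star-algebra homomorphism with kernel `J`. -/

def IsStochastic {Ω : Type*} (P : Ω → Ω → ℝ) : Prop :=
  (∀ i j, 0 ≤ P i j) ∧ ∀ i, HasSum (fun j => P i j) 1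

noncomputable def stochMul {Ω : Type*} (P Q : Ω → Ω → ℝ) : Ω → Ω → ℝ :=
  fun i k => ∑' j, P i j * Q j k

open Classical in
noncomputable def stochPow {Ω : Type*} (P : Ω → Ω → ℝ) : ℕ → Ω → Ω → ℝ
  | 0 => fun i j => if i = j then 1 else 0
  | n + 1 => stochMul (stochPow P n) P

/-- Irreducibility: every pair of states communicates. -/
def StochIrreducible {Ω : Type*} (P : Ω → Ω → ℝ) : Prop :=
  ∀ i j : Ω, ∃ n : ℕ, 0 < stochPow P n i j

variable (d : ℕ) (P : Fin d → Fin d → ℝ)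

/-- The `n`-th fiber of `Arv(P)`, viewed inside the Fock Hilbert space: matrices supported on
the support of `P^n` (with the Frobenius = `ℓ²` inner product coming from the `ℓ^∞(Ω)`-valued
one of the W*-correspondence `Arv(P)_n`). -/
def arvFiber (n : ℕ) : Submodule ℂ (EuclideanSpace ℂ (Fin d × Fin d)) where
  carrier := {v | ∀ p : Fin d × Fin d, ¬ 0 < stochPow P n p.1 p.2 → v p = 0}
  add_mem' := by
    intro a b ha hb p hp
    have := ha p hp; have := hb p hp
    simp_all [Pi.add_apply]
  zero_mem' := by intro p _; rfl
  smul_mem' := by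
    intro c a ha p hp
    have := ha p hp
    simp_all [Pi.smul_apply]

/-- The Fock Hilbert space of `Arv(P)`. -/
abbrev FockH : Type := lp (fun n : ℕ => ↥(arvFiber d P n)) 2

noncomputable instance : InnerProductSpace ℂ (FockH d P) := lp.instInnerProductSpace

/-- The matrix coefficients of the subproduct maps `U_{n,k}` of `Arv(P)` in its standard
presentation. -/
noncomputable def arvCoef (n k : ℕ) (i j l : Fin d) : ℂ :=
  if 0 < stochPow P (n + k) i l then
    ((Real.sqrt (stochPow P n i j * stochPow P k j l) /
        Real.sqrt (stochPow P (n + k) i l) : ℝ) : ℂ)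
  else 0

/-- `T` is the shift `S^{(n)}_A` for some `n` and some `A ∈ Arv(P)_n`:
`(S_A ξ)_{n+k} = U_{n,k}(A ⊗ ξ_k)` and `(S_A ξ)_m = 0` for `m < n`. -/
def IsShiftOp (T : FockH d P →L[ℂ] FockH d P) : Prop :=
  ∃ (n : ℕ) (A : Fin d → Fin d → ℂ),
    (∀ i j, ¬ 0 < stochPow P n i j → A i j = 0) ∧
    ∀ f : FockH d P,
      (∀ m, m < n → (T f) m = 0) ∧
      ∀ (k : ℕ) (il : Fin d × Fin d),
        (((T f) (n + k) : EuclideanSpace ℂ (Fin d × Fin d)) il =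
          ∑ j : Fin d, arvCoef d P n k il.1 j il.2 * A il.1 j *
            ((f k : EuclideanSpace ℂ (Fin d × Fin d)) (j, il.2)))

/-- `T` is the multiplication operator by an element `a ∈ ℓ^∞(Ω) = M ⊆ T(Arv(P))`. -/
def IsDiagOp (T : FockH d P →L[ℂ] FockH d P) : Prop :=
  ∃ a : Fin d → ℂ, ∀ (f : FockH d P) (m : ℕ) (il : Fin d × Fin d),
    ((T f) m : EuclideanSpace ℂ (Fin d × Fin d)) il =
      a il.1 * ((f m : EuclideanSpace ℂ (Fin d × Fin d)) il)

/-- The Toeplitz algebra `T(Arv(P))`: the C*-algebra generated by `ℓ^∞(Ω)` and the shifts. -/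
noncomputable def ToeplitzAlg : StarSubalgebra ℂ (FockH d P →L[ℂ] FockH d P) :=
  (StarAlgebra.adjoin ℂ {T | IsShiftOp d P T ∨ IsDiagOp d P T}).topologicalClosure

/-- `‖T Q_{[n,∞)}‖`: the norm of `T` on the part of the Fock space of degree `≥ n`. -/
noncomputable def tailNorm (T : FockH d P →L[ℂ] FockH d P) (n : ℕ) : ℝ :=
  ⨆ f : {f : FockH d P // ‖f‖ ≤ 1 ∧ ∀ m < n, f m = 0}, ‖T f.1‖

/-- Membership in the Cuntz ideal `J(T(Arv(P))) = {T : ‖T Q_{[n,∞)}‖ → 0}`. -/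
def InCuntzIdeal (T : FockH d P →L[ℂ] FockH d P) : Prop :=
  Filter.Tendsto (tailNorm d P T) Filter.atTop (nhds 0)


section Markov

variable {d : ℕ} {P : Fin d → Fin d → ℝ}

lemma int_dvd_of_eq {a b c : ℤ} (h : a ∣ b) (e : c = b) : a ∣ c := e ▸ h

lemma sp_succ (n : ℕ) (i k : Fin d) :
    stochPow P (n+1) i k = ∑ j, stochPow P n i j * P j k := by
  simp [stochPow, stochMul, tsum_fintype]

lemma sp_zero (i j : Fin d) : stochPow P 0 i j = if i = j then 1 else 0 := by
  simp [stochPow]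

lemma sp_eq (n : ℕ) (i j : Fin d) : stochPow P n i j = ((Matrix.of P) ^ n) i j := by
  induction n generalizing i j with
  | zero => simp [sp_zero, Matrix.one_apply]
  | succ n ih => rw [sp_succ, pow_succ, Matrix.mul_apply]; simp [ih]

lemma sp_add (n k : ℕ) (i l : Fin d) :
    stochPow P (n+k) i l = ∑ j, stochPow P n i j * stochPow P k j l := by
  simp only [sp_eq, pow_add, Matrix.mul_apply]

lemma sp_nonneg (hP : IsStochastic P) (n : ℕ) (i j : Fin d) : 0 ≤ stochPow P n i j := by
  induction n generalizing i j with
  | zero => rw [sp_zero]; split_ifs <;> norm_num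
  | succ n ih => rw [sp_succ]; exact Finset.sum_nonneg fun k _ => mul_nonneg (ih _ _) (hP.1 _ _)

lemma sp_row (hP : IsStochastic P) (n : ℕ) (i : Fin d) : ∑ j, stochPow P n i j = 1 := by
  have h1 : ∀ i, ∑ j, P i j = 1 := fun i => (hasSum_fintype _).unique (hP.2 i)
  induction n generalizing i with
  | zero => simp [sp_zero]
  | succ n ih =>
    simp only [sp_succ]
    rw [Finset.sum_comm]
    simp only [← Finset.mul_sum, h1, mul_one, ih]

lemma sp_le (hP : IsStochastic P) (n k : ℕ) (i j l : Fin d) :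
    stochPow P n i j * stochPow P k j l ≤ stochPow P (n+k) i l := by
  rw [sp_add]
  exact Finset.single_le_sum (f := fun j => stochPow P n i j * stochPow P k j l)
    (fun j _ => mul_nonneg (sp_nonneg hP _ _ _) (sp_nonneg hP _ _ _)) (Finset.mem_univ j)

lemma sp_pos (hP : IsStochastic P) {n k : ℕ} {i j l : Fin d}
    (h1 : 0 < stochPow P n i j) (h2 : 0 < stochPow P k j l) : 0 < stochPow P (n+k) i l :=
  lt_of_lt_of_le (mul_pos h1 h2) (sp_le hP n k i j l)

/-- Cyclic structure of an irreducible stochastic matrix. -/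
lemma exists_period (hd : 0 < d) (hP : IsStochastic P) (hirr : StochIrreducible P) :
    ∃ (r : ℕ) (c : Fin d → ℕ) (N : ℕ), 0 < r ∧
      (∀ n i j, 0 < stochPow P n i j → (r : ℤ) ∣ n - (c j - c i)) ∧
      (∀ n i j, N ≤ n → (r : ℤ) ∣ n - (c j - c i) → 0 < stochPow P n i j) := by
  let o : Fin d := ⟨0, hd⟩
  let S : AddSubmonoid ℕ :=
    { carrier := {n | 0 < stochPow P n o o}
      zero_mem' := by simp [sp_zero]
      add_mem' := fun {a b} ha hb => sp_pos hP ha hb }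
  have hS : ∀ n, n ∈ S ↔ 0 < stochPow P n o o := fun n => Iff.rfl
  choose a ha using fun i => hirr o i
  choose b hb using fun i => hirr i o
  obtain ⟨N0, hN0⟩ := Nat.exists_mem_closure_of_ge (S : Set ℕ)
  rw [AddSubmonoid.closure_eq] at hN0
  have hdvd : ∀ n ∈ S, Nat.setGcd (S : Set ℕ) ∣ n := fun n hn => Nat.setGcd_dvd_of_mem hn
  set r := Nat.setGcd (S : Set ℕ) with hr
  have hab : ∀ i, (r : ℤ) ∣ a i + b i := fun i => by
    exact_mod_cast hdvd _ (sp_pos hP (ha i) (hb i))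
  refine ⟨r, a, N0 + ∑ i, a i + ∑ i, b i, ?_, ?_, ?_⟩
  · obtain ⟨j, hj⟩ : ∃ j, 0 < stochPow P 1 o j := by
      by_contra! h
      have := sp_row hP 1 o
      have h2 : ∑ j, stochPow P 1 o j ≤ 0 := Finset.sum_nonpos fun j _ => h j
      linarith
    have h3 : 1 + b j ∈ S := sp_pos hP hj (hb j)
    have := hdvd _ h3
    exact Nat.pos_of_dvd_of_pos this (by omega)
  · intro n i j h
    have h1 : (r : ℤ) ∣ ((a i + n + b j : ℕ) : ℤ) := by
      exact_mod_cast hdvd _ (sp_pos hP (sp_pos hP (ha i) h) (hb j))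
    have h2 := hab j
    have := dvd_sub h1 h2
    push_cast at this
    refine int_dvd_of_eq this ?_; ring
  · intro n i j hn h
    have h1 : a j ≤ ∑ i, a i := Finset.single_le_sum (f := a) (fun _ _ => Nat.zero_le _) (Finset.mem_univ j)
    have h2 : b i ≤ ∑ i, b i := Finset.single_le_sum (f := b) (fun _ _ => Nat.zero_le _) (Finset.mem_univ i)
    obtain ⟨m, hm⟩ : ∃ m, n = b i + m + a j := ⟨n - b i - a j, by omega⟩
    have h3 : m ∈ S := by
      apply hN0 m (by omega)
      have h4 := dvd_sub h (hab i)
      have : (r : ℤ) ∣ m := by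
        refine int_dvd_of_eq h4 ?_
        rw [hm]; push_cast; ring
      exact_mod_cast this
    rw [hm]
    exact sp_pos hP (sp_pos hP (hb i) h3) (ha j)

/-- Convergence of powers along cyclic classes. -/
lemma sp_converge (hP : IsStochastic P) {r N : ℕ} {c : Fin d → ℕ} (hr : 0 < r)
    (h1 : ∀ n i j, 0 < stochPow P n i j → (r : ℤ) ∣ n - (c j - c i))
    (h2 : ∀ n i j, N ≤ n → (r : ℤ) ∣ n - (c j - c i) → 0 < stochPow P n i j) :
    ∃ lo : ℝ, 0 < lo ∧ ∀ ε : ℝ, 0 < ε → ∃ k0 : ℕ, ∀ (l i j : Fin d) (k n : ℕ), k0 ≤ k →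
      (r : ℤ) ∣ k - (c l - c j) → (r : ℤ) ∣ (n + k : ℕ) - (c l - c i) →
      lo ≤ stochPow P k j l ∧ lo ≤ stochPow P (n+k) i l ∧
        |stochPow P k j l - stochPow P (n+k) i l| ≤ ε := by
  classical
  -- a uniform positive lower bound
  have hmin : ∀ n : ℕ, ∃ δ : ℝ, 0 < δ ∧ δ ≤ 1/2 ∧ ∀ i j, 0 < stochPow P n i j → δ ≤ stochPow P n i j := by
    intro n
    let F : Finset ℝ := insert (1/2) ((Finset.univ.image fun q : Fin d × Fin d => stochPow P n q.1 q.2).filter (0 < ·))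
    have hF : F.Nonempty := ⟨1/2, by simp [F]⟩
    refine ⟨F.min' hF, ?_, F.min'_le _ (by simp [F]), fun i j hij => F.min'_le _ ?_⟩
    · rw [Finset.lt_min'_iff]
      intro y hy
      simp only [F, Finset.mem_insert, Finset.mem_filter] at hy
      rcases hy with rfl | hy
      · norm_num
      · exact hy.2
    · simp only [F, Finset.mem_insert, Finset.mem_filter, Finset.mem_image]
      exact Or.inr ⟨⟨(i, j), Finset.mem_univ _, rfl⟩, hij⟩
  let Q : Fin d → ℕ → ℝ → ℝ → Prop := fun l k lo hi =>
    ∀ j, (r : ℤ) ∣ k - (c l - c j) → lo ≤ stochPow P k j l ∧ stochPow P k j l ≤ hi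
  have hQadd : ∀ l k lo hi n, Q l k lo hi → Q l (n+k) lo hi := by
    intro l k lo hi n hQ i hi'
    have key : ∀ j, 0 < stochPow P n i j → lo ≤ stochPow P k j l ∧ stochPow P k j l ≤ hi := by
      intro j hj
      apply hQ j
      have := dvd_sub hi' (h1 n i j hj)
      refine int_dvd_of_eq this ?_; push_cast; ring
    have hrow := sp_row hP n i
    rw [sp_add]
    constructor
    · calc lo = ∑ j, stochPow P n i j * lo := by rw [← Finset.sum_mul, hrow, one_mul]
        _ ≤ _ := Finset.sum_le_sum fun j _ => by
          rcases (sp_nonneg hP n i j).eq_or_lt with h | h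
          · simp [← h]
          · exact mul_le_mul_of_nonneg_left (key j h).1 h.le
    · calc _ ≤ ∑ j, stochPow P n i j * hi := Finset.sum_le_sum fun j _ => by
            rcases (sp_nonneg hP n i j).eq_or_lt with h | h
            · simp [← h]
            · exact mul_le_mul_of_nonneg_left (key j h).2 h.le
        _ = hi := by rw [← Finset.sum_mul, hrow, one_mul]
  -- contraction
  set M := r * N with hM
  have hMN : N ≤ M := Nat.le_mul_of_pos_left N hr
  obtain ⟨δ, hδ, hδ2, hδM⟩ := hmin M
  have hQc : ∀ l k lo hi, lo ≤ hi → Q l k lo hi → ∃ lo' hi', lo ≤ lo' ∧ lo' ≤ hi' ∧ hi' - lo' ≤ (1 - δ) * (hi - lo)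
      ∧ Q l (M + k) lo' hi' := by
    intro l k lo hi hlh hQ
    by_cases hne : ∃ j0, (r : ℤ) ∣ k - (c l - c j0)
    · obtain ⟨j0, hj0⟩ := hne
      obtain ⟨hv1, hv2⟩ := hQ j0 hj0
      set v := stochPow P k j0 l
      refine ⟨δ * v + (1 - δ) * lo, δ * v + (1 - δ) * hi, by nlinarith, by nlinarith, by linarith, ?_⟩
      intro i hi'
      have key : ∀ j, 0 < stochPow P M i j → lo ≤ stochPow P k j l ∧ stochPow P k j l ≤ hi := by
        intro j hj
        apply hQ j
        have := dvd_sub hi' (h1 M i j hj)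
        refine int_dvd_of_eq this ?_; push_cast; ring
      have hrow := sp_row hP M i
      have hpos : δ ≤ stochPow P M i j0 := by
        apply hδM
        apply h2 M i j0 hMN
        have := dvd_sub hi' hj0
        refine int_dvd_of_eq this ?_; push_cast; ring
      rw [sp_add]
      constructor
      · have h3 : stochPow P M i j0 * (v - lo) ≤ ∑ j, stochPow P M i j * (stochPow P k j l - lo) := by
          refine Finset.single_le_sum (f := fun j => stochPow P M i j * (stochPow P k j l - lo)) (fun j _ => ?_) (Finset.mem_univ j0)
          rcases (sp_nonneg hP M i j).eq_or_lt with h | h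
          · simp [← h]
          · exact mul_nonneg h.le (by linarith [(key j h).1])
        have h4 : ∑ j, stochPow P M i j * (stochPow P k j l - lo) = ∑ j, stochPow P M i j * stochPow P k j l - lo := by
          simp only [mul_sub, Finset.sum_sub_distrib, ← Finset.sum_mul, hrow, one_mul]
        nlinarith
      · have h3 : stochPow P M i j0 * (hi - v) ≤ ∑ j, stochPow P M i j * (hi - stochPow P k j l) := by
          refine Finset.single_le_sum (f := fun j => stochPow P M i j * (hi - stochPow P k j l)) (fun j _ => ?_) (Finset.mem_univ j0)
          rcases (sp_nonneg hP M i j).eq_or_lt with h | h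
          · simp [← h]
          · exact mul_nonneg h.le (by linarith [(key j h).2])
        have h4 : ∑ j, stochPow P M i j * (hi - stochPow P k j l) = hi - ∑ j, stochPow P M i j * stochPow P k j l := by
          simp only [mul_sub, Finset.sum_sub_distrib, ← Finset.sum_mul, hrow, one_mul]
        nlinarith
    · refine ⟨lo, lo, le_rfl, le_rfl, by nlinarith, ?_⟩
      intro i hi'
      exfalso
      apply hne
      refine ⟨i, ?_⟩
      have h5 : (r : ℤ) ∣ (M : ℤ) := ⟨N, by rw [hM]; push_cast; ring⟩
      have := dvd_sub hi' h5
      refine int_dvd_of_eq this ?_; push_cast; ring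
  obtain ⟨lo, hlo, hlo2, hloN⟩ := hmin N
  have hit : ∀ (l : Fin d) (t : ℕ), ∃ lo' hi', lo ≤ lo' ∧ lo' ≤ hi' ∧ hi' - lo' ≤ (1 - δ) ^ t ∧ Q l (t * M + N) lo' hi' := by
    intro l t
    induction t with
    | zero =>
      refine ⟨lo, 1, le_rfl, by linarith, by simp; linarith, ?_⟩
      intro j hj
      simp only [zero_mul, zero_add] at hj ⊢
      refine ⟨hloN _ _ (h2 N j l le_rfl hj), ?_⟩
      rw [← sp_row hP N j]
      exact Finset.single_le_sum (f := fun l => stochPow P N j l) (fun _ _ => sp_nonneg hP _ _ _) (Finset.mem_univ l)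
    | succ t ih =>
      obtain ⟨lo', hi', a1, a2, a3, a4⟩ := ih
      obtain ⟨lo2, hi2, b1, b2, b3, b4⟩ := hQc l _ lo' hi' a2 a4
      refine ⟨lo2, hi2, a1.trans b1, b2, ?_, ?_⟩
      · rw [pow_succ']
        exact b3.trans (mul_le_mul_of_nonneg_left a3 (by linarith))
      · have : (t+1) * M + N = M + (t * M + N) := by ring
        rw [this]; exact b4
  refine ⟨lo, hlo, fun ε hε => ?_⟩
  obtain ⟨t, ht⟩ := exists_pow_lt_of_lt_one hε (show 1 - δ < 1 by linarith)
  refine ⟨t * M + N, fun l i j k n hk hj hi => ?_⟩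
  obtain ⟨lo', hi', a1, a2, a3, a4⟩ := hit l t
  obtain ⟨k', rfl⟩ : ∃ k', k = k' + (t * M + N) := ⟨k - (t*M+N), by omega⟩
  have q1 := hQadd l _ _ _ k' a4
  have q2 := hQadd l _ _ _ n q1
  obtain ⟨e1, e2⟩ := q1 j hj
  obtain ⟨e3, e4⟩ := q2 i hi
  refine ⟨a1.trans e1, a1.trans e3, ?_⟩
  rw [abs_le]; constructor <;> linarith

end Markov


noncomputable section Model

open MeasureTheory AddCircle
open scoped ComplexOrder

/-- The model Hilbert space `L²(𝕋)`. -/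
abbrev KK : Type := Lp ℂ 2 (haarAddCircle (T := (1:ℝ)))

/-- Multiplication operators on `L²(𝕋)`. -/
def mulC : C(AddCircle (1:ℝ), ℂ) →L[ℂ] (KK →L[ℂ] KK) :=
  ((ContinuousLinearMap.mul ℂ ℂ).holderL (haarAddCircle (T := (1:ℝ))) ⊤ 2 2) ∘L
    (ContinuousMap.toLp (E := ℂ) ⊤ (haarAddCircle (T := (1:ℝ))) ℂ)

lemma mulC_toLp (h f : C(AddCircle (1:ℝ), ℂ)) :
    mulC h (ContinuousMap.toLp (E := ℂ) 2 haarAddCircle ℂ f) =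
      ContinuousMap.toLp (E := ℂ) 2 haarAddCircle ℂ (h * f) := by
  apply Lp.ext
  have e1 := (ContinuousLinearMap.mul ℂ ℂ).coeFn_holder (r := 2)
    (ContinuousMap.toLp (E := ℂ) ⊤ (haarAddCircle (T := (1:ℝ))) ℂ h)
    (ContinuousMap.toLp (E := ℂ) 2 haarAddCircle ℂ f)
  have e2 := ContinuousMap.coeFn_toLp (p := ⊤) (𝕜 := ℂ) (haarAddCircle (T := (1:ℝ))) h
  have e3 := ContinuousMap.coeFn_toLp (p := 2) (𝕜 := ℂ) (haarAddCircle (T := (1:ℝ))) f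
  have e4 := ContinuousMap.coeFn_toLp (p := 2) (𝕜 := ℂ) (haarAddCircle (T := (1:ℝ))) (h * f)
  refine Filter.EventuallyEq.trans e1 ?_
  filter_upwards [e2, e3, e4] with x h2 h3 h4
  rw [h2, h3, h4]; simp

lemma mulC_mul (h h' : C(AddCircle (1:ℝ), ℂ)) : mulC (h * h') = mulC h ∘L mulC h' := by
  apply DFunLike.coe_injective
  refine (ContinuousMap.toLp_denseRange ℂ (haarAddCircle (T := (1:ℝ))) ℂ (p := 2) (by norm_num)).equalizer
    (by fun_prop) (by fun_prop) ?_
  ext1 f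
  simp [mulC_toLp, mul_assoc]

lemma mulC_one : mulC 1 = ContinuousLinearMap.id ℂ KK := by
  apply DFunLike.coe_injective
  refine (ContinuousMap.toLp_denseRange ℂ (haarAddCircle (T := (1:ℝ))) ℂ (p := 2) (by norm_num)).equalizer
    (by fun_prop) (by fun_prop) ?_
  ext1 f
  simp [mulC_toLp]

/-- The orthonormal basis of exponentials. -/
def eK (n : ℤ) : KK := fourierLp (T := (1:ℝ)) 2 n

lemma fourier_mul_fourier (a b : ℤ) :
    (fourier a * fourier b : C(AddCircle (1:ℝ), ℂ)) = fourier (a + b) := by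
  ext x; simp

lemma mulC_eK (a n : ℤ) : mulC (fourier a) (eK n) = eK (a + n) := by
  rw [eK, fourierLp, mulC_toLp, fourier_mul_fourier]; rfl

lemma eK_orthonormal : Orthonormal ℂ eK := orthonormal_fourier

lemma mulC_eq_zero_of_small (h : C(AddCircle (1:ℝ), ℂ))
    (hh : ∀ ε : ℝ, 0 < ε → ∃ n : ℤ, ‖mulC h (eK n)‖ ≤ ε) : h = 0 := by
  have h0 : mulC h (eK 0) = 0 := by
    by_contra hne
    have hpos : 0 < ‖mulC h (eK 0)‖ := norm_pos_iff.mpr hne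
    have hC : 0 < ‖mulC‖ + 1 := by positivity
    obtain ⟨n, hn⟩ := hh (‖mulC h (eK 0)‖ / (2 * (‖mulC‖ + 1))) (by positivity)
    have e : mulC h (eK 0) = mulC (fourier (-n)) (mulC h (eK n)) := by
      have : eK n = mulC (fourier n) (eK 0) := by rw [mulC_eK, add_zero]
      rw [this, ← ContinuousLinearMap.comp_apply, ← ContinuousLinearMap.comp_apply,
        ← mulC_mul, ← mulC_mul]
      congr 2
      rw [mul_comm _ h, mul_assoc, fourier_mul_fourier]
      ext x; simp
    have b1 : ‖mulC (fourier (-n))‖ ≤ ‖mulC‖ := by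
      have := mulC.le_opNorm (fourier (-n))
      rwa [fourier_norm, mul_one] at this
    have b2 : ‖mulC h (eK 0)‖ ≤ ‖mulC‖ * ‖mulC h (eK n)‖ := by
      conv_lhs => rw [e]
      exact (ContinuousLinearMap.le_opNorm _ _).trans (mul_le_mul_of_nonneg_right b1 (norm_nonneg _))
    have b3 : ‖mulC‖ * ‖mulC h (eK n)‖ ≤ (‖mulC‖ + 1) * (‖mulC h (eK 0)‖ / (2 * (‖mulC‖ + 1))) := by
      gcongr; linarith
    have b4 : (‖mulC‖ + 1) * (‖mulC h (eK 0)‖ / (2 * (‖mulC‖ + 1))) = ‖mulC h (eK 0)‖ / 2 := by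
      field_simp
    linarith
  rw [eK, fourierLp, mulC_toLp] at h0
  have h1 : h * fourier 0 = h := by ext x; simp
  rw [h1] at h0
  exact ContinuousMap.toLp_injective (𝕜 := ℂ) (haarAddCircle (T := (1:ℝ))) (by rw [h0, map_zero])

/-- The `r`-fold covering of the circle. -/
def cover (r : ℕ) : C(AddCircle (1:ℝ), Circle) :=
  ⟨fun x => toCircle (r • x), by
    have : Continuous (toCircle : AddCircle (1:ℝ) → Circle) := AddCircle.continuous_toCircle
    fun_prop⟩

lemma cover_surjective {r : ℕ} (hr : 0 < r) : Function.Surjective (cover r) := by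
  intro w
  obtain ⟨y, rfl⟩ := (AddCircle.homeomorphCircle (T := (1:ℝ)) one_ne_zero).surjective w
  induction y using QuotientAddGroup.induction_on with
  | H t =>
    refine ⟨((t / r : ℝ) : AddCircle (1:ℝ)), ?_⟩
    have hr' : (r : ℝ) ≠ 0 := by positivity
    have : r • ((t / r : ℝ) : AddCircle (1:ℝ)) = ((t : ℝ) : AddCircle (1:ℝ)) := by
      rw [← AddCircle.coe_nsmul]; congr 1; simp; field_simp
    simp only [cover, ContinuousMap.coe_mk, this]
    rw [AddCircle.homeomorphCircle_apply]

/-- The characters of the circle. -/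
def chi (k : ℤ) : C(Circle, ℂ) := ⟨fun w => ((w ^ k : Circle) : ℂ),
  continuous_subtype_val.comp (continuous_zpow k)⟩

lemma chi_cover (r : ℕ) (k : ℤ) : (chi k).comp (cover r) = fourier (r * k) := by
  ext x
  simp only [chi, cover, ContinuousMap.comp_apply, ContinuousMap.coe_mk, fourier_apply]
  rw [← toCircle_zsmul]
  congr 2
  rw [mul_comm, mul_zsmul]; simp

abbrev GM (d : ℕ) : Type := CStarMatrix (Fin d) (Fin d) C(Circle, ℂ)

example (d : ℕ) : CStarAlgebra (GM d) := inferInstance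

end Model

noncomputable section Model2

open MeasureTheory AddCircle
open scoped ComplexOrder

variable {d : ℕ}

/-- The model space `L²(𝕋) ⊗ ℂ^(d × d)`. -/
abbrev LL (d : ℕ) : Type := PiLp 2 (fun _ : Fin d × Fin d => KK)

/-- The twisted scalar representation. -/
def mT (r : ℕ) (c : Fin d → ℕ) (i j : Fin d) (h : C(Circle, ℂ)) : KK →L[ℂ] KK :=
  mulC (fourier ((c j : ℤ) - c i) * h.comp (cover r))

lemma mT_continuous (r : ℕ) (c : Fin d → ℕ) (i j : Fin d) : Continuous (mT r c i j) := by
  unfold mT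
  have h1 : Continuous (fun h : C(Circle, ℂ) => h.comp (cover r)) := ContinuousMap.continuous_precomp _
  exact mulC.continuous.comp (continuous_const.mul h1)

lemma mT_add (r : ℕ) (c : Fin d → ℕ) (i j : Fin d) (h h' : C(Circle, ℂ)) :
    mT r c i j (h + h') = mT r c i j h + mT r c i j h' := by
  rw [mT, mT, mT, ← map_add, ← mul_add]; rfl

lemma mT_smul (r : ℕ) (c : Fin d → ℕ) (i j : Fin d) (a : ℂ) (h : C(Circle, ℂ)) :
    mT r c i j (a • h) = a • mT r c i j h := by
  rw [mT, mT, ← map_smul]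
  congr 1; ext x; simp; ring

lemma mT_zero (r : ℕ) (c : Fin d → ℕ) (i j : Fin d) : mT r c i j 0 = 0 := by
  have := mT_smul r c i j 0 0
  simpa using this

lemma mT_sum (r : ℕ) (c : Fin d → ℕ) (i j : Fin d) {ι : Type*} (s : Finset ι) (h : ι → C(Circle, ℂ)) :
    mT r c i j (∑ t ∈ s, h t) = ∑ t ∈ s, mT r c i j (h t) := by
  classical
  induction s using Finset.induction_on with
  | empty => simp [mT_zero]
  | insert a s ha ih => rw [Finset.sum_insert ha, Finset.sum_insert ha, mT_add, ih]

lemma mT_mul (r : ℕ) (c : Fin d → ℕ) (i j k : Fin d) (h h' : C(Circle, ℂ)) :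
    mT r c i k (h * h') = mT r c i j h ∘L mT r c j k h' := by
  rw [mT, mT, mT, ← mulC_mul]
  congr 1
  have : (fourier ((c k : ℤ) - c i) : C(AddCircle (1:ℝ), ℂ)) = fourier ((c j : ℤ) - c i) * fourier ((c k : ℤ) - c j) := by
    rw [fourier_mul_fourier]; congr 1; ring
  rw [this]
  ext x; simp; ring

lemma mT_one (r : ℕ) (c : Fin d → ℕ) (i : Fin d) : mT r c i i 1 = ContinuousLinearMap.id ℂ KK := by
  rw [mT, ← mulC_one]
  congr 1; ext x; simp

lemma mT_chi (r : ℕ) (c : Fin d → ℕ) (i j : Fin d) (k n : ℤ) :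
    mT r c i j (chi k) (eK n) = eK (r * k + (c j - c i) + n) := by
  rw [mT, chi_cover, fourier_mul_fourier, mulC_eK]; congr 1; ring

lemma mT_eq_zero {r : ℕ} (hr : 0 < r) (c : Fin d → ℕ) (i j : Fin d) (h : C(Circle, ℂ))
    (hh : ∀ ε : ℝ, 0 < ε → ∃ n : ℤ, ‖mT r c i j h (eK n)‖ ≤ ε) : h = 0 := by
  have h1 := mulC_eq_zero_of_small _ hh
  ext w
  obtain ⟨x, rfl⟩ := cover_surjective hr w
  have h2 := congrArg (fun f : C(AddCircle (1:ℝ), ℂ) => f x) h1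
  simp only [ContinuousMap.mul_apply, ContinuousMap.comp_apply, ContinuousMap.zero_apply, mul_eq_zero] at h2
  rcases h2 with h2 | h2
  · rw [fourier_apply] at h2
    exact absurd h2 (Circle.coe_ne_zero _)
  · simpa using h2

/-- The matrix multiplication operators. -/
def MM (r : ℕ) (c : Fin d → ℕ) (g : GM d) : LL d →L[ℂ] LL d :=
  ∑ p : Fin d × Fin d, ∑ j : Fin d,
    ((PiLp.continuousLinearEquiv 2 ℂ (fun _ : Fin d × Fin d => KK)).symm.toContinuousLinearMap ∘L
      ContinuousLinearMap.single ℂ (fun _ : Fin d × Fin d => KK) p) ∘L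
    (mT r c p.1 j (g p.1 j)) ∘L (PiLp.proj 2 (fun _ : Fin d × Fin d => KK) (j, p.2))

lemma MM_apply (r : ℕ) (c : Fin d → ℕ) (g : GM d) (F : LL d) (p : Fin d × Fin d) :
    MM r c g F p = ∑ j, mT r c p.1 j (g p.1 j) (F (j, p.2)) := by
  simp only [MM, _root_.sum_apply, ContinuousLinearMap.comp_apply]
  rw [WithLp.ofLp_sum, Finset.sum_apply, Finset.sum_eq_single p]
  · rw [WithLp.ofLp_sum, Finset.sum_apply]
    simp
  · intro q _ hq
    rw [WithLp.ofLp_sum, Finset.sum_apply]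
    simp [hq.symm]
  · simp

lemma MM_ext {X Y : LL d →L[ℂ] LL d} (h : ∀ F p, X F p = Y F p) : X = Y := by
  ext F p; rw [h]

lemma MM_continuous (r : ℕ) (c : Fin d → ℕ) : Continuous (MM r c) := by
  unfold MM
  refine continuous_finsetSum _ fun p _ => continuous_finsetSum _ fun j _ => ?_
  have h0 : Continuous (fun g : GM d => g p.1 j) :=
    (continuous_apply j).comp (continuous_apply p.1)
  have h1 := (mT_continuous r c p.1 j).comp h0
  exact continuous_const.clm_comp (h1.clm_comp continuous_const)

lemma MM_add (r : ℕ) (c : Fin d → ℕ) (g g' : GM d) : MM r c (g + g') = MM r c g + MM r c g' := by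
  apply MM_ext; intro F p
  simp [MM_apply, mT_add, Finset.sum_add_distrib]

lemma MM_smul (r : ℕ) (c : Fin d → ℕ) (a : ℂ) (g : GM d) : MM r c (a • g) = a • MM r c g := by
  apply MM_ext; intro F p
  simp [MM_apply, mT_smul, Finset.smul_sum]

lemma MM_one (r : ℕ) (c : Fin d → ℕ) : MM r c (1 : GM d) = ContinuousLinearMap.id ℂ _ := by
  apply MM_ext; intro F p
  rw [MM_apply, Finset.sum_eq_single p.1]
  · rw [CStarMatrix.one_apply_eq, mT_one]; rfl
  · intro j _ hj
    rw [CStarMatrix.one_apply_ne hj.symm, mT_zero]; rfl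
  · simp

lemma MM_mul (r : ℕ) (c : Fin d → ℕ) (g g' : GM d) : MM r c (g * g') = MM r c g ∘L MM r c g' := by
  apply MM_ext; intro F p
  rw [ContinuousLinearMap.comp_apply, MM_apply, MM_apply]
  simp only [MM_apply, map_sum, CStarMatrix.mul_apply, mT_sum, _root_.sum_apply]
  rw [Finset.sum_comm]
  refine Finset.sum_congr rfl fun j _ => Finset.sum_congr rfl fun k _ => ?_
  rw [mT_mul r c p.1 j k]; rfl

/-- elementary vectors of the model space -/
def eV (n : ℤ) : EuclideanSpace ℂ (Fin d × Fin d) →ₗᵢ[ℂ] LL d where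
  toFun v := WithLp.toLp 2 (fun p => v p • eK n)
  map_add' v w := by ext1; simp [add_smul]
  map_smul' a v := by ext1; simp [mul_smul]
  norm_map' v := by
    rw [PiLp.norm_eq_of_L2, EuclideanSpace.norm_eq]
    simp [norm_smul, eK_orthonormal.1 n]

lemma eV_apply (n : ℤ) (v : EuclideanSpace ℂ (Fin d × Fin d)) (p : Fin d × Fin d) :
    eV n v p = v p • eK n := rfl

lemma eV_inner {n m : ℤ} (h : n ≠ m) (v w : EuclideanSpace ℂ (Fin d × Fin d)) :
    inner ℂ (eV n v) (eV m w) = 0 := by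
  rw [PiLp.inner_apply]
  refine Finset.sum_eq_zero fun p _ => ?_
  rw [eV_apply, eV_apply, inner_smul_left, inner_smul_right, eK_orthonormal.2 h]; simp

end Model2

noncomputable section Tails

variable {d : ℕ} {P : Fin d → Fin d → ℝ}

lemma UU_orth : OrthogonalFamily ℂ (fun n : ℕ => ↥(arvFiber d P n))
    (fun n : ℕ => (eV (d := d) (n : ℤ)).comp (arvFiber d P n).subtypeₗᵢ) := by
  intro i j hij v w
  exact eV_inner (by exact_mod_cast hij) _ _

/-- The embedding of the Fock space into the model space. -/
def UU : FockH d P →ₗᵢ[ℂ] LL d := UU_orth.linearIsometry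

lemma UU_single (k : ℕ) (v : arvFiber d P k) :
    UU (lp.single 2 k v : FockH d P) = eV (k : ℤ) (v : EuclideanSpace ℂ (Fin d × Fin d)) := by
  rw [UU, OrthogonalFamily.linearIsometry_apply_single]; rfl

variable {K K' : Type*} [NormedAddCommGroup K] [NormedSpace ℂ K]
  [NormedAddCommGroup K'] [NormedSpace ℂ K']

def TV (X : FockH d P →L[ℂ] K) : Prop :=
  ∀ ε : ℝ, 0 < ε → ∃ n : ℕ, ∀ f : FockH d P, (∀ m < n, f m = 0) → ‖X f‖ ≤ ε * ‖f‖

lemma TV.add {X Y : FockH d P →L[ℂ] K} (hX : TV X) (hY : TV Y) : TV (X + Y) := by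
  intro ε hε
  obtain ⟨n, hn⟩ := hX (ε/2) (by positivity)
  obtain ⟨m, hm⟩ := hY (ε/2) (by positivity)
  refine ⟨max n m, fun f hf => ?_⟩
  have h1 := hn f fun k hk => hf k (lt_of_lt_of_le hk (le_max_left _ _))
  have h2 := hm f fun k hk => hf k (lt_of_lt_of_le hk (le_max_right _ _))
  calc ‖(X + Y) f‖ ≤ ‖X f‖ + ‖Y f‖ := norm_add_le _ _
    _ ≤ _ := by linarith

lemma TV.comp_left (Z : K →L[ℂ] K') {X : FockH d P →L[ℂ] K} (hX : TV X) : TV (Z ∘L X) := by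
  intro ε hε
  have hZ : 0 < ‖Z‖ + 1 := by positivity
  obtain ⟨n, hn⟩ := hX (ε/(‖Z‖+1)) (by positivity)
  refine ⟨n, fun f hf => ?_⟩
  have h1 := hn f hf
  calc ‖Z (X f)‖ ≤ ‖Z‖ * ‖X f‖ := Z.le_opNorm _
    _ ≤ (‖Z‖+1) * (ε/(‖Z‖+1) * ‖f‖) := by gcongr; linarith
    _ = ε * ‖f‖ := by field_simp

lemma TV.smul (a : ℂ) {X : FockH d P →L[ℂ] K} (hX : TV X) : TV (a • X) := by
  have := hX.comp_left (a • ContinuousLinearMap.id ℂ K)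
  convert this using 1
  ext f; simp

lemma TV_zero : TV (0 : FockH d P →L[ℂ] K) := fun ε hε => ⟨0, fun f _ => by simp; positivity⟩

lemma TV_closed : IsClosed {X : FockH d P →L[ℂ] K | TV X} := by
  refine isClosed_of_closure_subset fun X hX => ?_
  intro ε hε
  obtain ⟨Y, hY, hd⟩ := (SeminormedAddCommGroup.mem_closure_iff (E := FockH d P →L[ℂ] K)).1 hX (ε/2) (by positivity)
  obtain ⟨n, hn⟩ := hY (ε/2) (by positivity)
  refine ⟨n, fun f hf => ?_⟩
  have h1 := hn f hf
  have h2 : ‖(X - Y) f‖ ≤ ε/2 * ‖f‖ :=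
    ((X - Y).le_opNorm f).trans (mul_le_mul_of_nonneg_right hd.le (norm_nonneg _))
  have h3 : X f = Y f + (X - Y) f := by simp
  rw [h3]
  calc _ ≤ ‖Y f‖ + ‖(X - Y) f‖ := norm_add_le _ _
    _ ≤ _ := by linarith

/-- Coordinate maps. -/
def ev (m : ℕ) : FockH d P →L[ℂ] arvFiber d P m := lp.evalCLM ℂ (fun n : ℕ => ↥(arvFiber d P n)) 2 m

lemma ev_apply (m : ℕ) (f : FockH d P) : ev m f = f m := rfl

/-- Operators asymptotically preserving tails. -/
def TP (T : FockH d P →L[ℂ] FockH d P) : Prop := ∀ m, TV (ev m ∘L T)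

lemma TV.comp_right {X : FockH d P →L[ℂ] K} (hX : TV X) {T : FockH d P →L[ℂ] FockH d P} (hT : TP T) :
    TV (X ∘L T) := by
  intro ε hε
  have hTn : 0 < ‖T‖ + 1 := by positivity
  obtain ⟨n, hn⟩ := hX (ε/2/(‖T‖+1)) (by positivity)
  have h1 : TV (∑ m ∈ Finset.range n, X ∘L (lp.singleContinuousLinearMap ℂ (fun n : ℕ => ↥(arvFiber d P n)) 2 m) ∘L (ev m ∘L T)) := by
    have : ∀ s : Finset ℕ, TV (∑ m ∈ s, X ∘L (lp.singleContinuousLinearMap ℂ (fun n : ℕ => ↥(arvFiber d P n)) 2 m) ∘L (ev m ∘L T)) := by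
      intro s
      induction s using Finset.induction_on with
      | empty => simpa using TV_zero
      | insert a s ha ih =>
        rw [Finset.sum_insert ha]
        exact (((hT a).comp_left _).comp_left _).add ih
    exact this _
  obtain ⟨n', hn'⟩ := h1 (ε/2) (by positivity)
  refine ⟨n', fun f hf => ?_⟩
  have h2 := hn' f hf
  have hdec : lp.singleContinuousLinearMap ℂ (fun n : ℕ => ↥(arvFiber d P n)) 2 = lp.singleContinuousLinearMap ℂ (fun n : ℕ => ↥(arvFiber d P n)) 2 := rfl
  set g : FockH d P := T f - ∑ m ∈ Finset.range n, lp.single 2 m (T f m) with hg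
  have hgz : ∀ m < n, g m = 0 := by
    intro m hm
    rw [hg, lp.coeFn_sub, Pi.sub_apply, lp.coeFn_sum, Finset.sum_apply, Finset.sum_eq_single m]
    · rw [lp.single_apply_self, sub_self]
    · intro b _ hb
      rw [lp.single_apply_ne _ _ _ hb.symm]
    · intro h; exact absurd (Finset.mem_range.2 hm) h
  have hgn : ‖g‖ ≤ ‖T f‖ := by
    have := lp.norm_compl_sum_single (p := 2) (by norm_num) (T f) (Finset.range n)
    have h3 : (‖g‖ ^ (2 : ENNReal).toReal) ≤ ‖T f‖ ^ (2 : ENNReal).toReal := by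
      rw [hg, this]
      have : 0 ≤ ∑ i ∈ Finset.range n, ‖(T f) i‖ ^ (2 : ENNReal).toReal := by positivity
      linarith
    exact (Real.rpow_le_rpow_iff (norm_nonneg _) (norm_nonneg _) (by norm_num)).1 h3
  have h3 := hn g hgz
  have h4 : (X ∘L T) f = X g + (∑ m ∈ Finset.range n, X ∘L (lp.singleContinuousLinearMap ℂ (fun n : ℕ => ↥(arvFiber d P n)) 2 m) ∘L (ev m ∘L T)) f := by
    rw [_root_.sum_apply, hg, map_sub, map_sum]
    simp [ev_apply]
  rw [h4]
  have h5 : ‖X g‖ ≤ ε/2 * ‖f‖ := by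
    calc ‖X g‖ ≤ ε/2/(‖T‖+1) * ‖g‖ := h3
      _ ≤ ε/2/(‖T‖+1) * ((‖T‖+1) * ‖f‖) := by
        gcongr
        refine hgn.trans ((T.le_opNorm f).trans ?_)
        gcongr; linarith
      _ = _ := by field_simp
  calc _ ≤ _ := norm_add_le _ _
    _ ≤ _ := by linarith

lemma inCuntz_iff (T : FockH d P →L[ℂ] FockH d P) : InCuntzIdeal d P T ↔ TV T := by
  have hbdd : ∀ n, BddAbove (Set.range fun f : {f : FockH d P // ‖f‖ ≤ 1 ∧ ∀ m < n, f m = 0} => ‖T f.1‖) := by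
    intro n
    refine ⟨‖T‖, ?_⟩
    rintro _ ⟨f, rfl⟩
    refine (T.le_opNorm _).trans ?_
    exact mul_le_of_le_one_right (norm_nonneg _) f.2.1
  have hne : ∀ n, Nonempty {f : FockH d P // ‖f‖ ≤ 1 ∧ ∀ m < n, f m = 0} := fun n =>
    ⟨⟨0, by simp, fun m _ => rfl⟩⟩
  have hnn : ∀ n, 0 ≤ tailNorm d P T n := fun n => Real.iSup_nonneg fun _ => norm_nonneg _
  unfold InCuntzIdeal
  rw [Metric.tendsto_atTop]
  constructor
  · intro h ε hε
    obtain ⟨n, hn⟩ := h ε hε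
    have hn := hn n le_rfl
    rw [dist_zero_right, Real.norm_of_nonneg (hnn n)] at hn
    refine ⟨n, fun f hf => ?_⟩
    by_cases hf0 : f = 0
    · simp [hf0]
    have hfp : 0 < ‖f‖ := norm_pos_iff.mpr hf0
    let a : ℂ := ((‖f‖⁻¹ : ℝ) : ℂ)
    have ha : ‖a‖ = ‖f‖⁻¹ := by simp [a]
    have h1 : ‖T (a • f)‖ ≤ tailNorm d P T n := by
      refine le_ciSup (hbdd n) ⟨a • f, ?_, ?_⟩
      · rw [norm_smul, ha, inv_mul_cancel₀ hfp.ne']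
      · intro m hm
        rw [lp.coeFn_smul, Pi.smul_apply, hf m hm, smul_zero]
    rw [map_smul, norm_smul, ha] at h1
    have h2 : ‖f‖⁻¹ * ‖T f‖ ≤ ε := h1.trans hn.le
    rwa [inv_mul_le_iff₀ hfp, mul_comm] at h2
  · intro h ε hε
    obtain ⟨n, hn⟩ := h (ε/2) (by positivity)
    refine ⟨n, fun k hk => ?_⟩
    rw [dist_zero_right, Real.norm_of_nonneg (hnn k)]
    refine lt_of_le_of_lt ?_ (half_lt_self hε)
    have := hne k
    refine ciSup_le fun f => ?_
    refine (hn f.1 fun m hm => f.2.2 m (lt_of_lt_of_le hm hk)).trans ?_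
    exact mul_le_of_le_one_right (by positivity) f.2.1

/-- Graded operators with decaying coefficients vanish on tails. -/
lemma TV_of_graded (X : FockH d P →L[ℂ] LL d) (s : ℤ)
    (hX : ∀ k (v : arvFiber d P k), ∃ w, X (lp.single 2 k v) = eV (s + k) w)
    (hdec : ∀ ε : ℝ, 0 < ε → ∃ k0 : ℕ, ∀ k ≥ k0, ∀ v : arvFiber d P k, ‖X (lp.single 2 k v)‖ ≤ ε * ‖v‖) :
    TV X := by
  intro ε hε
  obtain ⟨k0, hk0⟩ := hdec ε hε
  refine ⟨k0, fun f hf => ?_⟩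
  have hs := (lp.hasSum_single (p := 2) (by norm_num) f)
  have hs2 := X.hasSum hs
  refine le_of_tendsto (hs2.norm) (Filter.Eventually.of_forall fun S => ?_)
  have h1 : ‖∑ k ∈ S, X (lp.single 2 k (f k))‖ ^ 2 = ∑ k ∈ S, ‖X (lp.single 2 k (f k))‖ ^ 2 := by
    induction S using Finset.induction_on with
    | empty => simp
    | insert a S ha ih =>
      rw [Finset.sum_insert ha, Finset.sum_insert ha, ← ih, sq, sq, sq]
      apply norm_add_sq_eq_norm_sq_add_norm_sq_of_inner_eq_zero (𝕜 := ℂ) 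
      rw [inner_sum]
      refine Finset.sum_eq_zero fun b hb => ?_
      obtain ⟨w, hw⟩ := hX a (f a)
      obtain ⟨w', hw'⟩ := hX b (f b)
      rw [hw, hw']
      apply eV_inner
      have : a ≠ b := fun h => ha (h ▸ hb)
      intro h; apply this; exact_mod_cast add_left_cancel h
  have h2 : ∑ k ∈ S, ‖X (lp.single 2 k (f k))‖ ^ 2 ≤ (ε * ‖f‖)^2 := by
    have h3 : ∑ k ∈ S, ‖f k‖ ^ 2 ≤ ‖f‖^2 := by
      have := lp.sum_rpow_le_norm_rpow (p := 2) (by norm_num) f S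
      simpa using this
    calc _ ≤ ∑ k ∈ S, ε^2 * ‖f k‖^2 := by
          refine Finset.sum_le_sum fun k _ => ?_
          rw [← mul_pow]
          by_cases hk : k0 ≤ k
          · gcongr; exact hk0 k hk (f k)
          · rw [hf k (by omega), lp.single_zero]; simp
      _ = ε^2 * ∑ k ∈ S, ‖f k‖^2 := by rw [Finset.mul_sum]
      _ ≤ _ := by rw [mul_pow]; gcongr
  rw [← h1] at h2
  exact (abs_le_of_sq_le_sq' h2 (by positivity)).2

end Tails

noncomputable section GAlg
open scoped ComplexOrder

variable {d : ℕ} {P : Fin d → Fin d → ℝ}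

/-- The embedding as a continuous linear map. -/
def UC : FockH d P →L[ℂ] LL d := UU.toContinuousLinearMap

lemma UC_apply (f : FockH d P) : UC f = UU f := rfl

/-- `T` is asymptotically the model operator of symbol `g`. -/
def RR (r : ℕ) (c : Fin d → ℕ) (T : FockH d P →L[ℂ] FockH d P) (g : GM d) : Prop :=
  TV (UC ∘L T - MM r c g ∘L UC)

lemma TP_closed : IsClosed {T : FockH d P →L[ℂ] FockH d P | TP T} := by
  have : {T : FockH d P →L[ℂ] FockH d P | TP T} = ⋂ m, {T | TV (ev m ∘L T)} := by
    ext T; simp [TP]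
  rw [this]
  refine isClosed_iInter fun m => ?_
  exact TV_closed.preimage (continuous_const.clm_comp continuous_id)

lemma RR_closed (r : ℕ) (c : Fin d → ℕ) :
    IsClosed {x : (FockH d P →L[ℂ] FockH d P) × GM d | RR r c x.1 x.2} := by
  refine TV_closed.preimage (f := fun x : (FockH d P →L[ℂ] FockH d P) × GM d => UC ∘L x.1 - MM r c x.2 ∘L UC) ?_
  exact (continuous_const.clm_comp continuous_fst).sub
    (((MM_continuous r c).comp continuous_snd).clm_comp continuous_const)

lemma TP.add {S T : FockH d P →L[ℂ] FockH d P} (hS : TP S) (hT : TP T) : TP (S + T) := by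
  intro m
  have := (hS m).add (hT m)
  convert this using 1
  ext f; simp

lemma TP.mul {S T : FockH d P →L[ℂ] FockH d P} (hS : TP S) (hT : TP T) : TP (S * T) :=
  fun m => (hS m).comp_right hT

lemma TP_smul_one (a : ℂ) : TP (a • (1 : FockH d P →L[ℂ] FockH d P)) := by
  intro m ε hε
  refine ⟨m + 1, fun f hf => ?_⟩
  have : (ev m ∘L (a • (1 : FockH d P →L[ℂ] FockH d P))) f = a • f m := rfl
  rw [this, hf m (by omega)]
  simp only [smul_zero, norm_zero]
  positivity

lemma RR.add {r : ℕ} {c : Fin d → ℕ} {S T : FockH d P →L[ℂ] FockH d P} {g h : GM d}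
    (hS : RR r c S g) (hT : RR r c T h) : RR r c (S + T) (g + h) := by
  have := TV.add hS hT
  unfold RR
  convert this using 1
  rw [MM_add]
  ext1 f
  simp only [ContinuousLinearMap.comp_apply, _root_.add_apply, _root_.sub_apply, map_add]
  abel

lemma RR.mul {r : ℕ} {c : Fin d → ℕ} {S T : FockH d P →L[ℂ] FockH d P} {g h : GM d}
    (hS : RR r c S g) (hT : RR r c T h) (hT' : TP T) : RR r c (S * T) (g * h) := by
  have := (hS.comp_right hT').add (hT.comp_left (MM r c g))
  unfold RR
  convert this using 1
  rw [MM_mul]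
  ext1 f
  simp only [ContinuousLinearMap.comp_apply, _root_.add_apply, _root_.sub_apply, map_sub]
  have : (S * T) f = S (T f) := rfl
  rw [this]
  abel

lemma RR_smul_one (r : ℕ) (c : Fin d → ℕ) (a : ℂ) :
    RR r c (a • (1 : FockH d P →L[ℂ] FockH d P)) (a • 1) := by
  unfold RR
  have : UC ∘L (a • (1 : FockH d P →L[ℂ] FockH d P)) - MM r c (a • 1) ∘L UC = 0 := by
    rw [MM_smul, MM_one]
    ext1 f
    simp
  rw [this]
  exact TV_zero

/-- The C*-algebra of pairs (operator, symbol). -/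
def GG (r : ℕ) (c : Fin d → ℕ) : StarSubalgebra ℂ ((FockH d P →L[ℂ] FockH d P) × GM d) where
  carrier := {x | (RR r c x.1 x.2 ∧ TP x.1) ∧ (RR r c (star x.1) (star x.2) ∧ TP (star x.1))}
  mul_mem' := by
    rintro x y ⟨⟨a1, a2⟩, a3, a4⟩ ⟨⟨b1, b2⟩, b3, b4⟩
    refine ⟨⟨a1.mul b1 b2, a2.mul b2⟩, ?_, ?_⟩
    · rw [Prod.fst_mul, Prod.snd_mul, star_mul, star_mul]
      exact b3.mul a3 a4
    · rw [Prod.fst_mul, star_mul]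
      exact b4.mul a4
  add_mem' := by
    rintro x y ⟨⟨a1, a2⟩, a3, a4⟩ ⟨⟨b1, b2⟩, b3, b4⟩
    refine ⟨⟨a1.add b1, a2.add b2⟩, ?_, ?_⟩
    · rw [Prod.fst_add, Prod.snd_add, star_add, star_add]
      exact a3.add b3
    · rw [Prod.fst_add, star_add]
      exact a4.add b4
  algebraMap_mem' := by
    intro a
    rw [Algebra.algebraMap_eq_smul_one]
    refine ⟨⟨RR_smul_one r c a, TP_smul_one a⟩, ?_, ?_⟩
    · rw [Prod.smul_fst, Prod.smul_snd, star_smul, star_smul, Prod.fst_one, Prod.snd_one, star_one, star_one]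
      exact RR_smul_one r c _
    · rw [Prod.smul_fst, star_smul, Prod.fst_one, star_one]
      exact TP_smul_one _
  star_mem' := by
    rintro x ⟨h1, h2⟩
    refine ⟨h2, ?_⟩
    rw [Prod.fst_star, Prod.snd_star, star_star, star_star]
    exact h1

lemma mem_GG {r : ℕ} {c : Fin d → ℕ} {x : (FockH d P →L[ℂ] FockH d P) × GM d} :
    x ∈ GG r c ↔ (RR r c x.1 x.2 ∧ TP x.1) ∧ (RR r c (star x.1) (star x.2) ∧ TP (star x.1)) := Iff.rfl

lemma GG_closed (r : ℕ) (c : Fin d → ℕ) :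
    IsClosed ((GG r c : StarSubalgebra ℂ ((FockH d P →L[ℂ] FockH d P) × GM d)) : Set ((FockH d P →L[ℂ] FockH d P) × GM d)) := by
  have h1 : IsClosed {x : (FockH d P →L[ℂ] FockH d P) × GM d | RR r c x.1 x.2 ∧ TP x.1} :=
    (RR_closed r c).inter (TP_closed.preimage continuous_fst)
  have h2 : IsClosed {x : (FockH d P →L[ℂ] FockH d P) × GM d | RR r c (star x.1) (star x.2) ∧ TP (star x.1)} :=
    h1.preimage (f := fun x : (FockH d P →L[ℂ] FockH d P) × GM d => star x) continuous_star
  exact h1.inter h2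

lemma UC_TV_iff (T : FockH d P →L[ℂ] FockH d P) : TV (UC ∘L T) ↔ TV T := by
  unfold TV
  have : ∀ f, ‖(UC ∘L T) f‖ = ‖T f‖ := fun f => UU.norm_map (T f)
  simp only [this]

lemma TV.neg {K : Type*} [NormedAddCommGroup K] [NormedSpace ℂ K] {X : FockH d P →L[ℂ] K} (hX : TV X) : TV (-X) := by
  have := hX.smul (-1)
  simpa using this

lemma TV_iff_of_RR {r N : ℕ} {c : Fin d → ℕ} (hr : 0 < r)
    (h2 : ∀ n i j, N ≤ n → (r : ℤ) ∣ n - (c j - c i) → 0 < stochPow P n i j)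
    {T : FockH d P →L[ℂ] FockH d P} {g : GM d} (hT : RR r c T g) : TV T ↔ g = 0 := by
  constructor
  · intro h
    have h3 : TV (MM r c g ∘L (UC : FockH d P →L[ℂ] LL d)) := by
      have := ((UC_TV_iff T).2 h).add hT.neg
      convert this using 1
      ext1 f; simp
    ext i j : 1
    refine mT_eq_zero hr c i j _ fun ε hε => ?_
    obtain ⟨n, hn⟩ := h3 ε hε
    let k := r * (n + N)
    have hk : n + N ≤ k := Nat.le_mul_of_pos_left _ hr
    have hp : 0 < stochPow P k j j := h2 k j j (by omega) (by simp [k])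
    let v : arvFiber d P k := ⟨EuclideanSpace.single (j, j) 1, by
      intro p hp'
      rw [EuclideanSpace.single_apply, if_neg]
      rintro rfl
      exact hp' hp⟩
    have hv : ‖(lp.single 2 k v : FockH d P)‖ = 1 := by
      rw [lp.norm_single (by norm_num)]
      change ‖EuclideanSpace.single (j, j) (1:ℂ)‖ = 1
      simp
    have h4 := hn (lp.single 2 k v) (fun m hm => by
      rw [lp.single_apply_ne _ _ _ (by omega)])
    rw [hv, mul_one] at h4
    refine ⟨k, le_trans ?_ h4⟩
    have h5 : (MM r c g ∘L (UC : FockH d P →L[ℂ] LL d)) (lp.single 2 k v) (i, j) = mT r c i j (g i j) (eK k) := by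
      rw [ContinuousLinearMap.comp_apply, UC_apply, UU_single, MM_apply, Finset.sum_eq_single j]
      · simp [eV_apply, v]
      · intro b _ hb
        simp [eV_apply, v, hb]
      · simp
    change ‖mT r c i j (g i j) (eK k)‖ ≤ _
    rw [← h5]
    exact PiLp.norm_apply_le _ _
  · rintro rfl
    rw [← UC_TV_iff]
    unfold RR at hT
    have : MM r c (0 : GM d) = 0 := by
      have := MM_add r c (0 : GM d) 0
      rw [add_zero] at this
      exact left_eq_add.1 this
    rw [this] at hT
    simpa using hT

end GAlg

noncomputable section Gens
open scoped ComplexOrder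

variable {d : ℕ} {P : Fin d → Fin d → ℝ}

/-- The operator is the shift of degree `n` by `A`. -/
def ShiftData (n : ℕ) (A : Fin d → Fin d → ℂ) (T : FockH d P →L[ℂ] FockH d P) : Prop :=
    (∀ i j, ¬ 0 < stochPow P n i j → A i j = 0) ∧
    ∀ f : FockH d P,
      (∀ m, m < n → (T f) m = 0) ∧
      ∀ (k : ℕ) (il : Fin d × Fin d),
        (((T f) (n + k) : EuclideanSpace ℂ (Fin d × Fin d)) il =
          ∑ j : Fin d, arvCoef d P n k il.1 j il.2 * A il.1 j *
            ((f k : EuclideanSpace ℂ (Fin d × Fin d)) (j, il.2)))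

lemma sp_le_one (hP : IsStochastic P) (n : ℕ) (i j : Fin d) : stochPow P n i j ≤ 1 := by
  rw [← sp_row hP n i]
  exact Finset.single_le_sum (f := fun j => stochPow P n i j) (fun j _ => sp_nonneg hP _ _ _) (Finset.mem_univ j)

lemma coef_aux {q a b lo : ℝ} (hlo : 0 < lo) (hq : 0 ≤ q) (hq1 : q ≤ 1) (ha : lo ≤ a) (hb : lo ≤ b) :
    |Real.sqrt (q * a) / Real.sqrt b - Real.sqrt q| ≤ |a - b| / lo := by
  have hb0 : 0 < Real.sqrt b := Real.sqrt_pos.2 (by linarith)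
  have ha0 : 0 ≤ Real.sqrt a := Real.sqrt_nonneg _
  have hb2 : Real.sqrt b * Real.sqrt b = b := Real.mul_self_sqrt (by linarith)
  have ha2 : Real.sqrt a * Real.sqrt a = a := Real.mul_self_sqrt (by linarith)
  have hqs : Real.sqrt q ≤ 1 := Real.sqrt_le_one.2 hq1
  have e : Real.sqrt (q * a) / Real.sqrt b - Real.sqrt q
      = Real.sqrt q * ((a - b) / ((Real.sqrt a + Real.sqrt b) * Real.sqrt b)) := by
    rw [Real.sqrt_mul hq]
    have : a - b = (Real.sqrt a - Real.sqrt b) * (Real.sqrt a + Real.sqrt b) := by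
      nlinarith
    have h3 : Real.sqrt a + Real.sqrt b ≠ 0 := by positivity
    rw [this]
    field_simp
  rw [e, abs_mul, abs_of_nonneg (Real.sqrt_nonneg q), abs_div]
  have h4 : lo ≤ |(Real.sqrt a + Real.sqrt b) * Real.sqrt b| := by
    rw [abs_of_nonneg (by positivity)]
    nlinarith [mul_nonneg ha0 hb0.le]
  calc _ ≤ 1 * (|a - b| / |(Real.sqrt a + Real.sqrt b) * Real.sqrt b|) := by gcongr
    _ ≤ _ := by rw [one_mul]; gcongr

lemma coef_est (hP : IsStochastic P) {r N : ℕ} {c : Fin d → ℕ} (hr : 0 < r)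
    (h1 : ∀ n i j, 0 < stochPow P n i j → (r : ℤ) ∣ n - (c j - c i))
    (h2 : ∀ n i j, N ≤ n → (r : ℤ) ∣ n - (c j - c i) → 0 < stochPow P n i j) (n : ℕ)
    (ε : ℝ) (hε : 0 < ε) : ∃ k0 : ℕ, ∀ k ≥ k0, ∀ i j l, 0 < stochPow P n i j →
      (0 < stochPow P k j l ∨ 0 < stochPow P (n + k) i l) →
      ‖arvCoef d P n k i j l - (Real.sqrt (stochPow P n i j) : ℂ)‖ ≤ ε := by
  obtain ⟨lo, hlo, H⟩ := sp_converge hP hr h1 h2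
  obtain ⟨k0, hk0⟩ := H (ε * lo) (by positivity)
  refine ⟨k0, fun k hk i j l hn hor => ?_⟩
  have d1 := h1 _ _ _ hn
  have hboth : (r : ℤ) ∣ k - (c l - c j) ∧ (r : ℤ) ∣ (n + k : ℕ) - (c l - c i) := by
    rcases hor with h | h
    · have d2 := h1 _ _ _ h
      refine ⟨d2, ?_⟩
      have e : (((n + k : ℕ) : ℤ) - (c l - c i)) = (n - (c j - c i)) + (k - (c l - c j)) := by
        push_cast; ring
      rw [e]; exact dvd_add d1 d2
    · have d2 := h1 _ _ _ h
      refine ⟨?_, d2⟩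
      have e : ((k : ℤ) - (c l - c j)) = (((n + k : ℕ) : ℤ) - (c l - c i)) - (n - (c j - c i)) := by
        push_cast; ring
      rw [e]; exact dvd_sub d2 d1
  obtain ⟨ha, hb, hab⟩ := hk0 l i j k n hk hboth.1 hboth.2
  rw [arvCoef, if_pos (by linarith), ← Complex.ofReal_sub, Complex.norm_real, Real.norm_eq_abs]
  refine (coef_aux hlo hn.le (sp_le_one hP _ _ _) ha hb).trans ?_
  rw [div_le_iff₀ hlo]
  exact hab

lemma eucl_norm_le (w : EuclideanSpace ℂ (Fin d × Fin d)) (a : ℝ) (ha : 0 ≤ a) (h : ∀ p, ‖w p‖ ≤ a) :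
    ‖w‖ ≤ (d * d : ℕ) * a := by
  have h1 : ‖w‖ ^ 2 ≤ ((d * d : ℕ) * a) ^ 2 := by
    rw [EuclideanSpace.norm_sq_eq]
    calc ∑ p, ‖w p‖ ^ 2 ≤ ∑ p : Fin d × Fin d, a ^ 2 := by
          refine Finset.sum_le_sum fun p _ => ?_
          have := h p
          gcongr
      _ = (d * d : ℕ) * a ^ 2 := by simp
      _ ≤ _ := by
        rw [mul_pow]
        gcongr
        have : (d * d : ℕ) ≤ (d * d) ^ 2 := Nat.le_self_pow (by norm_num) _
        exact_mod_cast this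
  exact (abs_le_of_sq_le_sq' h1 (by positivity)).2

/-- matrix action on the left index -/
def mact (B : Fin d → Fin d → Fin d → ℂ) (v : EuclideanSpace ℂ (Fin d × Fin d)) :
    EuclideanSpace ℂ (Fin d × Fin d) :=
  WithLp.toLp 2 fun p => ∑ j, B p.1 j p.2 * v (j, p.2)

lemma mact_apply (B : Fin d → Fin d → Fin d → ℂ) (v : EuclideanSpace ℂ (Fin d × Fin d)) (p : Fin d × Fin d) :
    mact B v p = ∑ j, B p.1 j p.2 * v (j, p.2) := rfl

lemma mact_sub_norm (B B' : Fin d → Fin d → Fin d → ℂ) (v : EuclideanSpace ℂ (Fin d × Fin d)) (δ : ℝ) (hδ : 0 ≤ δ)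
    (h : ∀ i j l, v (j, l) ≠ 0 → ‖B i j l - B' i j l‖ ≤ δ) :
    ‖mact B v - mact B' v‖ ≤ (d * d : ℕ) * (d * δ * ‖v‖) := by
  refine eucl_norm_le _ _ (by positivity) fun p => ?_
  rw [PiLp.sub_apply, mact_apply, mact_apply, ← Finset.sum_sub_distrib]
  calc _ ≤ ∑ j : Fin d, δ * ‖v‖ := by
        refine norm_sum_le_of_le _ fun j _ => ?_
        rw [← sub_mul, norm_mul]
        by_cases hv : v (j, p.2) = 0
        · rw [hv]; simp; positivity
        · gcongr
          · exact h _ _ _ hv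
          · exact PiLp.norm_apply_le _ _
    _ = _ := by simp; ring

lemma MM_eV (r : ℕ) (c : Fin d → ℕ) (g : GM d) (B : Fin d → Fin d → ℂ) (s : ℤ)
    (h : ∀ i j m, mT r c i j (g i j) (eK m) = B i j • eK (s + m)) (m : ℤ)
    (v : EuclideanSpace ℂ (Fin d × Fin d)) :
    MM r c g (eV m v) = eV (s + m) (mact (fun i j _ => B i j) v) := by
  ext1 p
  rw [MM_apply, eV_apply, mact_apply, Finset.sum_smul]
  refine Finset.sum_congr rfl fun j _ => ?_
  rw [eV_apply, map_smul, h, smul_smul, mul_comm]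

lemma lp_eq_single (F : FockH d P) (k : ℕ) (h : ∀ m, m ≠ k → F m = 0) : F = lp.single 2 k (F k) := by
  apply lp.ext
  funext m
  by_cases hm : m = k
  · subst hm; rw [lp.single_apply_self]
  · rw [lp.single_apply_ne _ _ _ hm, h m hm]

lemma shift_single {n : ℕ} {A : Fin d → Fin d → ℂ} {T : FockH d P →L[ℂ] FockH d P}
    (hT : ShiftData n A T) (k : ℕ) (v : arvFiber d P k) :
    ∃ w : arvFiber d P (n + k), T (lp.single 2 k v) = lp.single 2 (n + k) w ∧
      (w : EuclideanSpace ℂ (Fin d × Fin d)) = mact (fun i j l => arvCoef d P n k i j l * A i j) v := by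
  obtain ⟨-, h⟩ := hT
  obtain ⟨h1, h2⟩ := h (lp.single 2 k v)
  refine ⟨_, lp_eq_single _ (n + k) ?_, ?_⟩
  · intro m hm
    by_cases hmn : m < n
    · exact h1 m hmn
    · obtain ⟨k', rfl⟩ := Nat.exists_eq_add_of_le (not_lt.1 hmn)
      have hk : k' ≠ k := by omega
      ext p
      rw [h2 k' p, lp.single_apply_ne _ _ _ hk]
      simp
  · ext p
    rw [h2 k p, lp.single_apply_self, mact_apply]

lemma shift_star_single_lt {n : ℕ} {A : Fin d → Fin d → ℂ} {T : FockH d P →L[ℂ] FockH d P}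
    (hT : ShiftData n A T) (m : ℕ) (hm : m < n) (v : arvFiber d P m) :
    (star T) (lp.single 2 m v) = 0 := by
  rw [ContinuousLinearMap.star_eq_adjoint]
  refine ext_inner_left ℂ fun f => ?_
  rw [ContinuousLinearMap.adjoint_inner_right, lp.inner_single_right, (hT.2 f).1 m hm]
  simp

lemma arvCoef_zero (hP : IsStochastic P) (n k : ℕ) (i j l : Fin d) (h : ¬ 0 < stochPow P k j l) :
    arvCoef d P n k i j l = 0 := by
  have : stochPow P k j l = 0 := le_antisymm (not_lt.1 h) (sp_nonneg hP _ _ _)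
  simp [arvCoef, this]

lemma shift_star_single (hP : IsStochastic P) {n : ℕ} {A : Fin d → Fin d → ℂ} {T : FockH d P →L[ℂ] FockH d P}
    (hT : ShiftData n A T) (k : ℕ) (u : arvFiber d P (n + k)) :
    ∃ w : arvFiber d P k, (star T) (lp.single 2 (n + k) u) = lp.single 2 k w ∧
      (w : EuclideanSpace ℂ (Fin d × Fin d)) = mact (fun j i l => star (arvCoef d P n k i j l * A i j)) u := by
  refine ⟨⟨mact (fun j i l => star (arvCoef d P n k i j l * A i j)) u, ?_⟩, ?_, rfl⟩
  · intro p hp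
    rw [mact_apply]
    refine Finset.sum_eq_zero fun i _ => ?_
    rw [arvCoef_zero hP _ _ _ _ _ hp]
    simp
  · rw [ContinuousLinearMap.star_eq_adjoint]
    refine ext_inner_left ℂ fun f => ?_
    rw [ContinuousLinearMap.adjoint_inner_right, lp.inner_single_right, lp.inner_single_right]
    rw [Submodule.coe_inner, Submodule.coe_inner, PiLp.inner_apply, PiLp.inner_apply]
    simp only [(hT.2 f).2 k, mact_apply]
    rw [Fintype.sum_prod_type_right, Fintype.sum_prod_type_right]
    refine Finset.sum_congr rfl fun l _ => ?_
    simp only [RCLike.inner_apply, map_sum, Finset.mul_sum, Finset.sum_mul]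
    rw [Finset.sum_comm]
    refine Finset.sum_congr rfl fun j _ => Finset.sum_congr rfl fun i _ => ?_
    simp only [map_mul, star_mul, RCLike.star_def]
    ring

lemma shift_TP {n : ℕ} {A : Fin d → Fin d → ℂ} {T : FockH d P →L[ℂ] FockH d P}
    (hT : ShiftData n A T) : TP T := by
  intro m ε hε
  refine ⟨m + 1, fun f hf => ?_⟩
  have h0 : T f m = 0 := by
    by_cases hmn : m < n
    · exact (hT.2 f).1 m hmn
    · obtain ⟨k, rfl⟩ := Nat.exists_eq_add_of_le (not_lt.1 hmn)
      ext p
      rw [(hT.2 f).2 k p, hf k (by omega)]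
      simp
  have : (ev m ∘L T) f = T f m := rfl
  rw [this, h0, norm_zero]
  positivity

lemma shift_TP_star {n : ℕ} {A : Fin d → Fin d → ℂ} {T : FockH d P →L[ℂ] FockH d P}
    (hT : ShiftData n A T) : TP (star T) := by
  intro m ε hε
  refine ⟨n + m + 1, fun f hf => ?_⟩
  have h0 : (star T) f m = 0 := by
    refine ext_inner_left ℂ fun v => ?_
    refine (lp.inner_single_left (𝕜 := ℂ) m v (star T f)).symm.trans ?_
    rw [ContinuousLinearMap.star_eq_adjoint, ContinuousLinearMap.adjoint_inner_right]
    obtain ⟨w, hw, -⟩ := shift_single hT m v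
    rw [hw, lp.inner_single_left, hf (n + m) (by omega)]
    simp
  have : (ev m ∘L star T) f = star T f m := rfl
  rw [this, h0, norm_zero]
  positivity

/-- The symbol of a shift. -/
def symb (P : Fin d → Fin d → ℝ) (r : ℕ) (c : Fin d → ℕ) (n : ℕ) (A : Fin d → Fin d → ℂ) : GM d :=
  CStarMatrix.ofMatrix fun i j =>
    (A i j * (Real.sqrt (stochPow P n i j) : ℂ)) • chi (((n : ℤ) - (c j - c i)) / r)

lemma symb_apply (P : Fin d → Fin d → ℝ) (r : ℕ) (c : Fin d → ℕ) (n : ℕ) (A : Fin d → Fin d → ℂ) (i j : Fin d) :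
    symb P r c n A i j =
    (A i j * (Real.sqrt (stochPow P n i j) : ℂ)) • chi (((n : ℤ) - (c j - c i)) / r) := rfl

lemma star_chi (k : ℤ) : star (chi k) = chi (-k) := by
  ext w
  simp only [chi, ContinuousMap.star_apply, ContinuousMap.coe_mk]
  rw [zpow_neg, Circle.coe_inv_eq_conj]; rfl

lemma shift_mem (hP : IsStochastic P) {r N : ℕ} {c : Fin d → ℕ} (hr : 0 < r)
    (h1 : ∀ n i j, 0 < stochPow P n i j → (r : ℤ) ∣ n - (c j - c i))
    (h2 : ∀ n i j, N ≤ n → (r : ℤ) ∣ n - (c j - c i) → 0 < stochPow P n i j)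
    {n : ℕ} {A : Fin d → Fin d → ℂ} {T : FockH d P →L[ℂ] FockH d P}
    (hT : ShiftData n A T) : (T, symb P r c n A) ∈ GG r c := by
  have key : ∀ i j m, mT r c i j (symb P r c n A i j) (eK m) =
      (A i j * (Real.sqrt (stochPow P n i j) : ℂ)) • eK (n + m) := by
    intro i j m
    rw [symb_apply, mT_smul, _root_.smul_apply, mT_chi]
    by_cases hp : 0 < stochPow P n i j
    · rw [Int.mul_ediv_cancel' (h1 _ _ _ hp)]; congr 2; ring
    · rw [hT.1 i j hp]; simp
  have key' : ∀ i j m, mT r c i j (star (symb P r c n A) i j) (eK m) =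
      (star (A j i * (Real.sqrt (stochPow P n j i) : ℂ))) • eK (-n + m) := by
    intro i j m
    rw [CStarMatrix.star_apply, symb_apply, star_smul, mT_smul, _root_.smul_apply, star_chi, mT_chi]
    by_cases hp : 0 < stochPow P n j i
    · rw [mul_neg, Int.mul_ediv_cancel' (h1 _ _ _ hp)]; congr 2; ring
    · rw [hT.1 j i hp]; simp
  set M : ℝ := ∑ i, ∑ j, ‖A i j‖ with hM
  have hAM : ∀ i j, ‖A i j‖ ≤ M := fun i j =>
    (Finset.single_le_sum (f := fun j => ‖A i j‖) (fun _ _ => norm_nonneg _) (Finset.mem_univ j)).trans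
      (Finset.single_le_sum (f := fun i => ∑ j, ‖A i j‖) (fun _ _ => Finset.sum_nonneg fun _ _ => norm_nonneg _) (Finset.mem_univ i))
  have hM0 : 0 ≤ M := by positivity
  have est : ∀ ε : ℝ, 0 < ε → ∃ k0 : ℕ, ∀ k ≥ k0, ∀ i j l, 
      (0 < stochPow P k j l ∨ 0 < stochPow P (n + k) i l) →
      ‖arvCoef d P n k i j l * A i j - A i j * (Real.sqrt (stochPow P n i j) : ℂ)‖ ≤ ε := by
    intro ε hε
    obtain ⟨k0, hk0⟩ := coef_est hP hr h1 h2 n (ε / (M + 1)) (by positivity)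
    refine ⟨k0, fun k hk i j l hor => ?_⟩
    by_cases hp : 0 < stochPow P n i j
    · have := hk0 k hk i j l hp hor
      rw [mul_comm (A i j), ← sub_mul, norm_mul]
      calc _ ≤ ε / (M + 1) * (M + 1) := by
            gcongr
            linarith [hAM i j]
        _ = ε := by field_simp
    · rw [hT.1 i j hp]; simp; exact hε.le
  have est2 : ∀ ε : ℝ, 0 < ε → ∃ δ : ℝ, 0 < δ ∧ ∀ x : ℝ, 0 ≤ x → (d * d : ℕ) * (d * δ * x) ≤ ε * x := by
    intro ε hε
    refine ⟨ε / ((d * d : ℕ) * d + 1), by positivity, fun x hx => ?_⟩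
    have : (d * d : ℕ) * (d * (ε / ((d * d : ℕ) * d + 1)) * x) = (((d * d : ℕ) * d : ℝ) / ((d * d : ℕ) * d + 1)) * (ε * x) := by
      field_simp
    rw [this]
    apply mul_le_of_le_one_left (by positivity)
    rw [div_le_one (by positivity)]
    linarith
  refine mem_GG.2 ⟨⟨?_, shift_TP hT⟩, ?_, shift_TP_star hT⟩
  · have hform : ∀ k (v : arvFiber d P k), (UC ∘L T - MM r c (symb P r c n A) ∘L UC : FockH d P →L[ℂ] LL d) (lp.single 2 k v) =
        eV (n + k) (mact (fun i j l => arvCoef d P n k i j l * A i j) v -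
          mact (fun i j _ => A i j * (Real.sqrt (stochPow P n i j) : ℂ)) v) := by
      intro k v
      obtain ⟨w, hw, hw2⟩ := shift_single hT k v
      rw [_root_.sub_apply, ContinuousLinearMap.comp_apply, ContinuousLinearMap.comp_apply, hw, UC_apply, UC_apply,
        UU_single, UU_single, MM_eV r c _ _ _ key, hw2, map_sub]
      push_cast; rfl
    refine TV_of_graded _ n (fun k v => ⟨_, hform k v⟩) fun ε hε => ?_
    obtain ⟨δ, hδ, hδ2⟩ := est2 ε hε
    obtain ⟨k0, hk0⟩ := est δ hδ
    refine ⟨k0, fun k hk v => ?_⟩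
    rw [hform, LinearIsometry.norm_map]
    refine (mact_sub_norm _ _ _ δ hδ.le fun i j l hv => ?_).trans (hδ2 _ (norm_nonneg _))
    refine hk0 k hk i j l (Or.inl ?_)
    by_contra hc
    exact hv (v.2 (j, l) hc)
  · have hform : ∀ k (v : arvFiber d P (n + k)), (UC ∘L star T - MM r c (star (symb P r c n A)) ∘L UC : FockH d P →L[ℂ] LL d) (lp.single 2 (n + k) v) =
        eV (-n + (n + k : ℕ)) (mact (fun j i l => star (arvCoef d P n k i j l * A i j)) v -
          mact (fun j i _ => star (A i j * (Real.sqrt (stochPow P n i j) : ℂ))) v) := by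
      intro k v
      obtain ⟨w, hw, hw2⟩ := shift_star_single hP hT k v
      rw [_root_.sub_apply, ContinuousLinearMap.comp_apply, ContinuousLinearMap.comp_apply, hw, UC_apply, UC_apply,
        UU_single, UU_single, MM_eV r c _ _ _ key', hw2, map_sub]
      congr 2
      push_cast; ring_nf
    refine TV_of_graded _ (-n) (fun m v => ?_) fun ε hε => ?_
    · by_cases hmn : m < n
      · refine ⟨-(mact (fun j i _ => star (A i j * (Real.sqrt (stochPow P n i j) : ℂ))) v), ?_⟩
        rw [_root_.sub_apply, ContinuousLinearMap.comp_apply, ContinuousLinearMap.comp_apply,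
          shift_star_single_lt hT m hmn, UC_apply, UC_apply,
          UU_single, MM_eV r c _ _ _ key', map_zero, zero_sub, map_neg]
      · obtain ⟨k, rfl⟩ := Nat.exists_eq_add_of_le (not_lt.1 hmn)
        exact ⟨_, hform k v⟩
    · obtain ⟨δ, hδ, hδ2⟩ := est2 ε hε
      obtain ⟨k0, hk0⟩ := est δ hδ
      refine ⟨n + k0, fun m hm v => ?_⟩
      obtain ⟨k, rfl⟩ := Nat.exists_eq_add_of_le (show n ≤ m by omega)
      rw [hform, LinearIsometry.norm_map]
      refine (mact_sub_norm _ _ _ δ hδ.le fun i j l hv => ?_).trans (hδ2 _ (norm_nonneg _))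
      rw [← star_sub, norm_star]
      refine hk0 k (by omega) j i l (Or.inr ?_)
      by_contra hc
      exact hv (v.2 (j, l) hc)

lemma isShift_of_isDiag {T : FockH d P →L[ℂ] FockH d P} (h : IsDiagOp d P T) : IsShiftOp d P T := by
  obtain ⟨a, ha⟩ := h
  refine ⟨0, fun i j => if i = j then a i else 0, ?_, fun f => ⟨fun m hm => absurd hm (by omega), fun k il => ?_⟩⟩
  · intro i j hij
    rw [sp_zero] at hij
    split_ifs at hij with h
    · exact absurd one_pos hij
    · simp [h]
  · have e : ∀ m, m = k → ((T f) m : EuclideanSpace ℂ (Fin d × Fin d)) il =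
        a il.1 * ((f k : EuclideanSpace ℂ (Fin d × Fin d)) il) := by
      rintro m rfl; exact ha f m il
    rw [e _ (zero_add k), Finset.sum_eq_single il.1]
    · beta_reduce
      rw [if_pos rfl, arvCoef]
      have e2 : stochPow P (0 + k) il.1 il.2 = stochPow P k il.1 il.2 := by rw [zero_add]
      rw [e2, sp_zero, if_pos rfl, one_mul]
      split_ifs with hp
      · rw [div_self (Real.sqrt_pos.2 hp).ne']; simp
      · rw [(f k).2 il hp]; simp
    · intro b _ hb
      beta_reduce
      rw [if_neg hb.symm]; simp
    · simp

end Gens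

noncomputable section Exist
open scoped ComplexOrder

variable {d : ℕ} {P : Fin d → Fin d → ℝ}

lemma arvCoef_norm_le (hP : IsStochastic P) (n k : ℕ) (i j l : Fin d) : ‖arvCoef d P n k i j l‖ ≤ 1 := by
  unfold arvCoef
  split_ifs with h
  · rw [Complex.norm_real, Real.norm_of_nonneg (by positivity), div_le_one (Real.sqrt_pos.2 h)]
    exact Real.sqrt_le_sqrt (sp_le hP n k i j l)
  · simp

/-- Components of a shift operator. -/
def shC (n : ℕ) (A : Fin d → Fin d → ℂ) (m : ℕ) (f : FockH d P) : arvFiber d P m :=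
  ⟨if n ≤ m then mact (fun i j l => arvCoef d P n (m - n) i j l * A i j)
      (f (m - n) : EuclideanSpace ℂ (Fin d × Fin d)) else 0, by
    split_ifs with h
    · intro p hp
      rw [mact_apply]
      refine Finset.sum_eq_zero fun j _ => ?_
      rw [arvCoef, if_neg]
      · simp
      · rwa [Nat.add_sub_cancel' h]
    · exact Submodule.zero_mem _⟩

lemma shC_coe (n : ℕ) (A : Fin d → Fin d → ℂ) (m : ℕ) (f : FockH d P) :
    (shC n A m f : EuclideanSpace ℂ (Fin d × Fin d)) =
    if n ≤ m then mact (fun i j l => arvCoef d P n (m - n) i j l * A i j)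
      (f (m - n) : EuclideanSpace ℂ (Fin d × Fin d)) else 0 := rfl

lemma mact_add (B : Fin d → Fin d → Fin d → ℂ) (v w : EuclideanSpace ℂ (Fin d × Fin d)) :
    mact B (v + w) = mact B v + mact B w := by
  ext p
  simp [mact_apply, mul_add, Finset.sum_add_distrib]

lemma mact_smul (B : Fin d → Fin d → Fin d → ℂ) (a : ℂ) (v : EuclideanSpace ℂ (Fin d × Fin d)) :
    mact B (a • v) = a • mact B v := by
  ext p
  simp only [mact_apply, PiLp.smul_apply, smul_eq_mul, Finset.mul_sum]
  exact Finset.sum_congr rfl fun j _ => by ring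

lemma shC_add (n : ℕ) (A : Fin d → Fin d → ℂ) (m : ℕ) (f g : FockH d P) :
    shC n A m (f + g) = shC n A m f + shC n A m g := by
  apply Subtype.ext
  rw [Submodule.coe_add, shC_coe, shC_coe, shC_coe]
  split_ifs
  · rw [← mact_add]; rfl
  · simp

lemma shC_smul (n : ℕ) (A : Fin d → Fin d → ℂ) (m : ℕ) (a : ℂ) (f : FockH d P) :
    shC n A m (a • f) = a • shC n A m f := by
  apply Subtype.ext
  rw [Submodule.coe_smul, shC_coe, shC_coe]
  split_ifs
  · rw [← mact_smul]; rfl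
  · simp

lemma shC_bound (hP : IsStochastic P) (n : ℕ) (A : Fin d → Fin d → ℂ) : ∃ C : ℝ, 0 ≤ C ∧
    ∀ (f : FockH d P) (s : Finset ℕ), ∑ m ∈ s, ‖shC n A m f‖ ^ 2 ≤ (C * ‖f‖) ^ 2 := by
  set M : ℝ := ∑ i, ∑ j, ‖A i j‖ with hM
  have hAM : ∀ i j, ‖A i j‖ ≤ M := fun i j =>
    (Finset.single_le_sum (f := fun j => ‖A i j‖) (fun _ _ => norm_nonneg _) (Finset.mem_univ j)).trans
      (Finset.single_le_sum (f := fun i => ∑ j, ‖A i j‖) (fun _ _ => Finset.sum_nonneg fun _ _ => norm_nonneg _) (Finset.mem_univ i))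
  have hM0 : 0 ≤ M := by positivity
  set C : ℝ := (d * d : ℕ) * (d * M) with hC
  have hC0 : 0 ≤ C := by positivity
  refine ⟨C, hC0, fun f s => ?_⟩
  have h1 : ∀ m, n ≤ m → ‖shC n A m f‖ ≤ C * ‖f (m - n)‖ := by
    intro m hm
    change ‖(shC n A m f : EuclideanSpace ℂ (Fin d × Fin d))‖ ≤ C * ‖(f (m - n) : EuclideanSpace ℂ (Fin d × Fin d))‖
    rw [shC_coe, if_pos hm]
    have := mact_sub_norm (fun i j l => arvCoef d P n (m - n) i j l * A i j) 0
      (f (m - n) : EuclideanSpace ℂ (Fin d × Fin d)) M hM0 (by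
        intro i j l _
        simp only [Pi.zero_apply, sub_zero, norm_mul]
        calc _ ≤ 1 * M := mul_le_mul (arvCoef_norm_le hP _ _ _ _ _) (hAM _ _) (norm_nonneg _) zero_le_one
          _ = M := one_mul _)
    have e : mact 0 (f (m - n) : EuclideanSpace ℂ (Fin d × Fin d)) = 0 := by
      ext p; simp [mact_apply]
    rw [e, sub_zero] at this
    refine this.trans (le_of_eq ?_)
    rw [hC]; ring
  have h2 : ∀ m, ¬ n ≤ m → shC n A m f = 0 := by
    intro m hm
    apply Subtype.ext
    rw [shC_coe, if_neg hm]; rfl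
  calc ∑ m ∈ s, ‖shC n A m f‖ ^ 2 = ∑ m ∈ s with n ≤ m, ‖shC n A m f‖ ^ 2 := by
        symm
        apply Finset.sum_subset (Finset.filter_subset _ _)
        intro m hm hm'
        rw [h2 m (fun h => hm' (Finset.mem_filter.2 ⟨hm, h⟩))]
        simp
    _ ≤ ∑ m ∈ s with n ≤ m, C ^ 2 * ‖f (m - n)‖ ^ 2 := by
        refine Finset.sum_le_sum fun m hm => ?_
        rw [← mul_pow]
        have := h1 m (Finset.mem_filter.1 hm).2
        gcongr
    _ = C ^ 2 * ∑ k ∈ (s.filter (n ≤ ·)).image (· - n), ‖f k‖ ^ 2 := by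
        rw [Finset.sum_image, Finset.mul_sum]
        intro a ha b hb hab
        have ha := (Finset.mem_filter.1 ha).2
        have hb := (Finset.mem_filter.1 hb).2
        simp only at hab
        omega
    _ ≤ C ^ 2 * ‖f‖ ^ 2 := by
        gcongr
        have := lp.sum_rpow_le_norm_rpow (p := 2) (by norm_num) f ((s.filter (n ≤ ·)).image (· - n))
        simpa using this
    _ = _ := (mul_pow _ _ _).symm

lemma exists_shift (hP : IsStochastic P) (n : ℕ) (A : Fin d → Fin d → ℂ)
    (hA : ∀ i j, ¬ 0 < stochPow P n i j → A i j = 0) :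
    ∃ T : FockH d P →L[ℂ] FockH d P, ShiftData n A T := by
  obtain ⟨C, hC0, hC⟩ := shC_bound hP n A
  have hmem : ∀ f : FockH d P, Memℓp (fun m => shC n A m f) 2 := by
    intro f
    refine memℓp_gen' (C := (C * ‖f‖) ^ 2) fun s => ?_
    have := hC f s
    simpa using this
  let L : FockH d P →ₗ[ℂ] FockH d P :=
    { toFun := fun f => ⟨fun m => shC n A m f, hmem f⟩
      map_add' := by
        intro f g
        apply lp.ext; funext m
        exact shC_add n A m f g
      map_smul' := by
        intro a f
        apply lp.ext; funext m
        exact shC_smul n A m a f }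
  have hL : ∀ f m, L f m = shC n A m f := fun f m => rfl
  let T : FockH d P →L[ℂ] FockH d P := L.mkContinuous C (by
    intro f
    refine lp.norm_le_of_forall_sum_le (by norm_num) (by positivity) fun s => ?_
    have := hC f s
    simpa [hL] using this)
  have hT : ∀ f m, T f m = shC n A m f := fun f m => rfl
  refine ⟨T, hA, fun f => ⟨fun m hm => ?_, fun k il => ?_⟩⟩
  · rw [hT]
    apply Subtype.ext
    rw [shC_coe, if_neg (by omega)]; rfl
  · rw [hT, shC_coe, if_pos (by omega)]
    have e : ∀ k', k' = k → mact (fun i j l => arvCoef d P n k' i j l * A i j)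
      (f k' : EuclideanSpace ℂ (Fin d × Fin d)) il = ∑ j : Fin d, arvCoef d P n k il.1 j il.2 * A il.1 j *
            ((f k : EuclideanSpace ℂ (Fin d × Fin d)) (j, il.2)) := by
      rintro k' rfl; rfl
    exact e _ (by omega)

end Exist

noncomputable section CStarAbs
open scoped ComplexOrder CStarAlgebra

lemma lift_bound {A B : Type*} [CStarAlgebra A] [CStarAlgebra B] (φ : A →⋆ₐ[ℂ] B) (T : A) :
    ∃ T' : A, φ T' = φ T ∧ ‖T'‖ ≤ ‖φ T‖ := by
  by_cases hc0 : φ T = 0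
  · exact ⟨0, by rw [map_zero, hc0], by simp⟩
  have hφ : Continuous φ := map_continuous φ
  set c := ‖φ T‖ with hc
  have hcp : 0 < c := norm_pos_iff.2 hc0
  let h : ℝ → ℝ := fun t => c / max c (Real.sqrt t)
  have hden : ∀ t, max c (Real.sqrt t) ≠ 0 := fun t => (lt_of_lt_of_le hcp (le_max_left _ _)).ne'
  have hcont : Continuous h := by
    exact continuous_const.div (continuous_const.max Real.continuous_sqrt) hden
  have hsa : IsSelfAdjoint (star T * T) := IsSelfAdjoint.star_mul_self T
  have hsa' : IsSelfAdjoint (star (φ T) * φ T) := IsSelfAdjoint.star_mul_self _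
  refine ⟨T * cfc h (star T * T), ?_, ?_⟩
  · rw [map_mul, StarAlgHomClass.map_cfc φ h (star T * T) hcont.continuousOn hφ hsa
      (by rw [map_mul, map_star]; exact hsa'), map_mul, map_star]
    have : cfc h (star (φ T) * φ T) = 1 := by
      rw [← cfc_const_one ℝ (star (φ T) * φ T)]
      refine cfc_congr fun x hx => ?_
      have hx1 : ‖x‖ ≤ ‖cfc (fun x : ℝ => x) (star (φ T) * φ T)‖ :=
        norm_apply_le_norm_cfc (fun x : ℝ => x) (star (φ T) * φ T) hx
      rw [cfc_id' ℝ (star (φ T) * φ T), CStarRing.norm_star_mul_self, ← hc] at hx1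
      have hx2 : Real.sqrt x ≤ c := by
        rw [Real.sqrt_le_left hcp.le, sq]
        exact (le_abs_self x).trans hx1
      simp only [h]
      rw [max_eq_left hx2, div_self hcp.ne']
    rw [this, mul_one]
  · have hb : IsSelfAdjoint (cfc h (star T * T)) := cfc_predicate _ _
    have e : star (T * cfc h (star T * T)) * (T * cfc h (star T * T)) =
        cfc (fun t => h t * t * h t) (star T * T) := by
      rw [cfc_mul (fun t => h t * t) h (star T * T) (hcont.mul continuous_id).continuousOn hcont.continuousOn,
        cfc_mul h (fun t => t) (star T * T) hcont.continuousOn, cfc_id' ℝ (star T * T), star_mul, hb.star_eq]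
      simp only [mul_assoc]
    have h2 : ‖T * cfc h (star T * T)‖ * ‖T * cfc h (star T * T)‖ ≤ c * c := by
      rw [← CStarRing.norm_star_mul_self, e]
      refine norm_cfc_le (by positivity) fun x hx => ?_
      have hx0 : 0 ≤ x := spectrum_star_mul_self_nonneg x hx
      have h3 : Real.sqrt x ≤ max c (Real.sqrt x) := le_max_right _ _
      have h4 : 0 < max c (Real.sqrt x) := lt_of_lt_of_le hcp (le_max_left _ _)
      have h5 : x ≤ max c (Real.sqrt x) * max c (Real.sqrt x) := by
        calc x = Real.sqrt x * Real.sqrt x := (Real.mul_self_sqrt hx0).symm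
          _ ≤ _ := by gcongr
      have h6 : 0 ≤ h x * x * h x := by
        have : 0 ≤ h x := by positivity
        positivity
      rw [Real.norm_of_nonneg h6]
      simp only [h]
      rw [div_mul_eq_mul_div, div_mul_div_comm, div_le_iff₀ (by positivity)]
      nlinarith [mul_pos hcp hcp]
    exact abs_le_of_sq_le_sq' (by rw [sq, sq]; exact h2) hcp.le |>.2

lemma range_closed_of_starAlgHom {A B : Type*} [CStarAlgebra A] [CStarAlgebra B] (φ : A →⋆ₐ[ℂ] B) :
    IsClosed (Set.range φ) := by
  let f : NormedAddGroupHom A B :=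
    { toFun := φ
      map_add' := map_add φ
      bound' := ⟨1, fun v => by rw [one_mul]; exact NonUnitalStarAlgHom.norm_apply_le φ v⟩ }
  let K : AddSubgroup B := (φ : A →+ B).range
  have hyp : f.SurjectiveOnWith K 1 := by
    rintro _ ⟨T, rfl⟩
    obtain ⟨T', h1, h2⟩ := lift_bound φ T
    exact ⟨T', h1, by rw [one_mul]; exact h2⟩
  have h2 := controlled_closure_of_complete (f := f) one_pos one_pos hyp
  refine isClosed_of_closure_subset fun x hx => ?_
  obtain ⟨y, hy, -⟩ := h2 x hx
  exact ⟨y, hy⟩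

lemma exists_symbol_hom {A B : Type*} [CStarAlgebra A] [CStarAlgebra B]
    (G : StarSubalgebra ℂ (A × B)) (hG : IsClosed (G : Set (A × B)))
    (hinj : ∀ b, ((0 : A), b) ∈ G → b = 0) (X : Set A) (hX : ∀ x ∈ X, ∃ b, (x, b) ∈ G) :
    ∃ Ψ : ↥((StarAlgebra.adjoin ℂ X).topologicalClosure) →⋆ₐ[ℂ] B, (∀ T : ↥((StarAlgebra.adjoin ℂ X).topologicalClosure), ((T : A), Ψ T) ∈ G) ∧ IsClosed (Ψ.range : Set B) := by
  let p : G →⋆ₐ[ℂ] A := (StarAlgHom.fst ℂ A B).comp G.subtype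
  have hp : ∀ x : G, p x = x.1.1 := fun _ => rfl
  have := hG
  have hrc : IsClosed (Set.range p) := range_closed_of_starAlgHom p
  have hle : (StarAlgebra.adjoin ℂ X).topologicalClosure ≤ p.range := by
    refine StarSubalgebra.topologicalClosure_minimal ?_ ?_
    · rw [StarAlgebra.adjoin_le_iff]
      intro x hx
      obtain ⟨b, hb⟩ := hX x hx
      exact ⟨⟨(x, b), hb⟩, rfl⟩
    · exact hrc
  have hex : ∀ T : ↥((StarAlgebra.adjoin ℂ X).topologicalClosure), ∃ b, ((T : A), b) ∈ G := by
    intro T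
    obtain ⟨x, hx⟩ := hle T.2
    refine ⟨x.1.2, ?_⟩
    have : (T : A) = x.1.1 := hx.symm
    rw [this]
    exact x.2
  choose ψ hψ using hex
  have huniq : ∀ {a b b'}, (a, b) ∈ G → (a, b') ∈ G → b = b' := by
    intro a b b' h h'
    have := G.sub_mem h h'
    rw [Prod.mk_sub_mk, sub_self] at this
    exact sub_eq_zero.1 (hinj _ this)
  have hS : IsClosed (((StarAlgebra.adjoin ℂ X).topologicalClosure : StarSubalgebra ℂ A) : Set A) :=
    StarSubalgebra.isClosed_topologicalClosure _
  refine ⟨{ toFun := ψ, map_one' := ?_, map_mul' := ?_, map_zero' := ?_, map_add' := ?_, commutes' := ?_, map_star' := ?_ }, hψ, range_closed_of_starAlgHom _⟩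
  · exact huniq (hψ 1) (G.one_mem)
  · intro x y
    exact huniq (hψ (x * y)) (G.mul_mem (hψ x) (hψ y))
  · exact huniq (hψ 0) (G.zero_mem)
  · intro x y
    exact huniq (hψ (x + y)) (G.add_mem (hψ x) (hψ y))
  · intro z
    exact huniq (hψ _) (G.algebraMap_mem z)
  · intro x
    exact huniq (hψ (star x)) (star_mem (hψ x))

lemma exists_symbol_hom' {A B : Type*} [CStarAlgebra A] [CStarAlgebra B]
    (G : StarSubalgebra ℂ (A × B)) (hG : IsClosed (G : Set (A × B)))
    (hinj : ∀ b, ((0 : A), b) ∈ G → b = 0) (X : Set A) (hX : ∀ x ∈ X, ∃ b, (x, b) ∈ G) :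
    ∃ Ψ : ↥((StarAlgebra.adjoin ℂ X).topologicalClosure) →⋆ₐ[ℂ] B,
      (∀ T : ↥((StarAlgebra.adjoin ℂ X).topologicalClosure), ((T : A), Ψ T) ∈ G) ∧
      ∃ R : StarSubalgebra ℂ B, IsClosed (R : Set B) ∧
        (∀ x ∈ X, ∀ b, (x, b) ∈ G → b ∈ R) ∧ ∀ b ∈ R, ∃ T, Ψ T = b := by
  obtain ⟨Ψ, hΨ, hcl⟩ := exists_symbol_hom G hG hinj X hX
  refine ⟨Ψ, hΨ, Ψ.range, hcl, ?_, fun b hb => hb⟩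
  intro x hx b hb
  have hmem : x ∈ (StarAlgebra.adjoin ℂ X).topologicalClosure :=
    StarSubalgebra.le_topologicalClosure _ (StarAlgebra.subset_adjoin ℂ _ hx)
  refine ⟨⟨x, hmem⟩, ?_⟩
  have := G.sub_mem (hΨ ⟨x, hmem⟩) hb
  rw [Prod.mk_sub_mk, sub_self] at this
  exact sub_eq_zero.1 (hinj _ this)

end CStarAbs

noncomputable section Surj
open scoped ComplexOrder

variable {d : ℕ} {P : Fin d → Fin d → ℝ}

/-- Matrix units with function coefficients. -/
def EE (i j : Fin d) (f : C(Circle, ℂ)) : GM d :=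
  CStarMatrix.ofMatrix (Matrix.of fun a b => if a = i ∧ b = j then f else 0)

lemma EE_apply (i j a b : Fin d) (f : C(Circle, ℂ)) :
    EE i j f a b = if a = i ∧ b = j then f else 0 := rfl

lemma EE_continuous (i j : Fin d) : Continuous (EE (d := d) i j) := by
  refine continuous_pi fun a => continuous_pi fun b => ?_
  change Continuous fun f : C(Circle, ℂ) => if a = i ∧ b = j then f else 0
  split_ifs
  · exact continuous_id
  · exact continuous_const

lemma EE_mul (i j k : Fin d) (f g : C(Circle, ℂ)) : EE i j f * EE j k g = EE i k (f * g) := by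
  ext a b : 1
  rw [CStarMatrix.mul_apply, Finset.sum_eq_single j]
  · simp only [EE_apply, and_true, true_and]
    split_ifs <;> simp_all
  · intro t _ ht
    simp [EE_apply, ht]
  · simp

lemma EE_add (i j : Fin d) (f g : C(Circle, ℂ)) : EE i j f + EE i j g = EE i j (f + g) := by
  ext a b : 1
  rw [CStarMatrix.add_apply]
  simp only [EE_apply]
  split_ifs <;> simp

lemma EE_smul (i j : Fin d) (z : ℂ) (f : C(Circle, ℂ)) : z • EE i j f = EE i j (z • f) := by
  ext a b : 1
  rw [CStarMatrix.smul_apply]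
  simp only [EE_apply]
  split_ifs <;> simp

lemma EE_star (i j : Fin d) (f : C(Circle, ℂ)) : star (EE i j f) = EE j i (star f) := by
  ext a b : 1
  rw [CStarMatrix.star_apply]
  simp only [EE_apply]
  split_ifs <;> simp_all

lemma EE_sum (g : GM d) : g = ∑ i, ∑ j, EE i j (g i j) := by
  have h : ∀ a b, (∑ i, ∑ j, EE i j (g i j)) a b = ∑ i, ∑ j, EE i j (g i j) a b := by
    intro a b
    let φ : GM d →+ C(Circle, ℂ) := { toFun := fun x => x a b, map_zero' := rfl, map_add' := fun _ _ => rfl }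
    have e1 : φ (∑ i, ∑ j, EE i j (g i j)) = ∑ i, ∑ j, φ (EE i j (g i j)) := by
      rw [map_sum]
      exact Finset.sum_congr rfl fun i _ => map_sum _ _ _
    exact e1
  ext a b : 1
  rw [h, Finset.sum_eq_single a, Finset.sum_eq_single b]
  · simp [EE_apply]
  · intro t _ ht; simp [EE_apply, ht.symm]
  · simp
  · intro t _ ht
    exact Finset.sum_eq_zero fun j _ => by simp [EE_apply, ht.symm]
  · simp

lemma chi_mul (k l : ℤ) : chi k * chi l = chi (k + l) := by
  ext w
  simp only [chi, ContinuousMap.mul_apply, ContinuousMap.coe_mk]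
  rw [zpow_add, Circle.coe_mul]

lemma chi_zero : chi 0 = 1 := by
  ext w; simp [chi]

lemma full_of_units (R : StarSubalgebra ℂ (GM d)) (hR : IsClosed (R : Set (GM d)))
    (h0 : ∀ i j, EE i j (chi 0) ∈ R) (h1 : ∀ i j, EE i j (chi 1) ∈ R) (g : GM d) : g ∈ R := by
  let F : StarSubalgebra ℂ C(Circle, ℂ) :=
    { carrier := {f | ∀ i j, EE i j f ∈ R}
      mul_mem' := by
        intro f g hf hg i j
        rw [← EE_mul i j j]
        exact R.mul_mem (hf i j) (hg j j)
      add_mem' := by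
        intro f g hf hg i j
        rw [← EE_add]
        exact R.add_mem (hf i j) (hg i j)
      algebraMap_mem' := by
        intro z i j
        rw [Algebra.algebraMap_eq_smul_one, ← chi_zero, ← EE_smul]
        exact R.smul_mem (h0 i j) z
      star_mem' := by
        intro f hf i j
        rw [← EE_star]
        exact star_mem (hf j i) }
  have hF : ∀ f, f ∈ F ↔ ∀ i j, EE i j f ∈ R := fun f => Iff.rfl
  have hFc : IsClosed (F : Set C(Circle, ℂ)) := by
    have : (F : Set C(Circle, ℂ)) = ⋂ i, ⋂ j, (EE i j) ⁻¹' (R : Set (GM d)) := by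
      ext f
      simp only [Set.mem_iInter]
      exact hF f
    rw [this]
    exact isClosed_iInter fun i => isClosed_iInter fun j => hR.preimage (EE_continuous i j)
  have hsep : F.SeparatesPoints := by
    intro x y hxy
    refine ⟨chi 1, ⟨chi 1, h1, rfl⟩, ?_⟩
    simp only [chi, ContinuousMap.coe_mk, zpow_one]
    exact fun h => hxy (Circle.ext h)
  have htop := ContinuousMap.starSubalgebra_topologicalClosure_eq_top_of_separatesPoints F hsep
  have hall : ∀ f, f ∈ F := by
    intro f
    have : f ∈ F.topologicalClosure := by rw [htop]; trivial
    exact (hFc.closure_eq ▸ this : f ∈ (F : Set C(Circle, ℂ)))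
  rw [EE_sum g]
  exact R.sum_mem fun i _ => R.sum_mem fun j _ => hall _ i j

lemma units_of_symb {r N : ℕ} {c : Fin d → ℕ} (hr : 0 < r)
    (h2 : ∀ n i j, N ≤ n → (r : ℤ) ∣ n - (c j - c i) → 0 < stochPow P n i j)
    (R : StarSubalgebra ℂ (GM d))
    (hS : ∀ n A, (∀ i j, ¬ 0 < stochPow P n i j → A i j = 0) → symb P r c n A ∈ R) (m : ℕ) (i j : Fin d) :
    EE i j (chi m) ∈ R := by
  have key : ∀ i j : Fin d, ∀ k : ℕ, N + c i ≤ k → EE i j (chi k) ∈ R := by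
    intro i j k hk
    have hrk : k ≤ r * k := Nat.le_mul_of_pos_left _ hr
    obtain ⟨n, hn⟩ : ∃ n, r * k + c j = n + c i := ⟨r * k + c j - c i, by omega⟩
    have hnN : N ≤ n := by omega
    have hnz : (n : ℤ) - (c j - c i) = r * k := by
      have : ((r * k + c j : ℕ) : ℤ) = ((n + c i : ℕ) : ℤ) := by rw [hn]
      push_cast at this
      linarith
    have hp : 0 < stochPow P n i j := h2 n i j hnN (by rw [hnz]; exact dvd_mul_right _ _)
    have := hS n (fun a b => if a = i ∧ b = j then ((Real.sqrt (stochPow P n i j))⁻¹ : ℂ) else 0) (by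
      intro a b hab
      rw [if_neg]
      rintro ⟨rfl, rfl⟩
      exact hab hp)
    convert this using 1
    ext a b : 1
    rw [symb_apply, EE_apply]
    by_cases hab : a = i ∧ b = j
    · obtain ⟨rfl, rfl⟩ := hab
      have hs : (Real.sqrt (stochPow P n a b) : ℂ) ≠ 0 := by
        exact_mod_cast (Real.sqrt_pos.2 hp).ne'
      rw [if_pos ⟨rfl, rfl⟩, if_pos ⟨rfl, rfl⟩, inv_mul_cancel₀ hs, one_smul, hnz,
        Int.mul_ediv_cancel_left _ (by exact_mod_cast hr.ne')]
    · rw [if_neg hab, if_neg hab, zero_mul, zero_smul]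
  have h3 := key i j (m + (N + c i + c j)) (by omega)
  have h4 := key j j (N + c i + c j) (by omega)
  have h4' : star (EE j j (chi ((N + c i + c j : ℕ) : ℤ))) ∈ R := star_mem h4
  have h5 := mul_mem h3 h4'
  rw [EE_star, EE_mul, star_chi, chi_mul] at h5
  convert h5 using 2
  push_cast; ring_nf

end Surj

noncomputable section Final
open scoped ComplexOrder

lemma main_aux {d : ℕ} {P : Fin d → Fin d → ℝ} (hd : 0 < d)
    (hP : IsStochastic P) (hirr : StochIrreducible P) :
    ∃ Φ : ↥(ToeplitzAlg d P) →⋆ₐ[ℂ] Matrix (Fin d) (Fin d) C(Circle, ℂ),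
      Function.Surjective Φ ∧
      ∀ T : ↥(ToeplitzAlg d P),
        Φ T = 0 ↔ InCuntzIdeal d P (T : FockH d P →L[ℂ] FockH d P) := by
  obtain ⟨r, c, N, hr, h1, h2⟩ := exists_period hd hP hirr
  have hker : ∀ (T : FockH d P →L[ℂ] FockH d P) (g : GM d), (T, g) ∈ GG r c → (TV T ↔ g = 0) :=
    fun T g h => TV_iff_of_RR hr h2 (mem_GG.1 h).1.1
  have hinj : ∀ b : GM d, ((0 : FockH d P →L[ℂ] FockH d P), b) ∈ GG r c → b = 0 :=
    fun b hb => (hker 0 b hb).1 TV_zero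
  obtain ⟨Ψ, hΨ, R, hcl, hR, hRΨ⟩ := exists_symbol_hom' (GG r c : StarSubalgebra ℂ ((FockH d P →L[ℂ] FockH d P) × GM d)) (GG_closed r c) hinj
    {T | IsShiftOp d P T ∨ IsDiagOp d P T} (by
      rintro T hT
      have hT' : IsShiftOp d P T := hT.elim id isShift_of_isDiag
      obtain ⟨n, A, hA⟩ := hT'
      exact ⟨_, shift_mem hP hr h1 h2 (n := n) (A := A) hA⟩)
  have hsurj : Function.Surjective Ψ := by
    have hS : ∀ n A, (∀ i j, ¬ 0 < stochPow P n i j → A i j = 0) → symb P r c n A ∈ R := by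
      intro n A hA
      obtain ⟨T, hT⟩ := exists_shift hP n A hA
      have hs : (T, symb P r c n A) ∈ GG r c := shift_mem hP hr h1 h2 hT
      have hx : IsShiftOp d P T := ⟨n, A, hT⟩
      have hx' : T ∈ {T | IsShiftOp d P T ∨ IsDiagOp d P T} := Or.inl hx
      exact hR T hx' _ hs
    intro g
    exact hRΨ g (full_of_units R hcl (fun i j => units_of_symb hr h2 R hS 0 i j)
      (fun i j => units_of_symb hr h2 R hS 1 i j) g)
  let e : Matrix (Fin d) (Fin d) C(Circle, ℂ) ≃⋆ₐ[ℂ] GM d := CStarMatrix.ofMatrixStarAlgEquiv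
  refine ⟨(e.symm : GM d →⋆ₐ[ℂ] Matrix (Fin d) (Fin d) C(Circle, ℂ)).comp Ψ, ?_, ?_⟩
  · exact e.symm.surjective.comp hsurj
  · intro T
    have k1 : e.symm (Ψ T) = 0 ↔ Ψ T = 0 := map_eq_zero_iff e.symm e.symm.injective
    have k2 : TV T.1 ↔ Ψ T = 0 := hker T.1 (Ψ T) (hΨ T)
    exact k1.trans (k2.symm.trans (inCuntz_iff T.1).symm)

end Final

/-- main claim: for a `d × d` irreducible stochastic matrix `P`, the
Cuntz–Pimsner algebra `O(Arv(P)) = T(Arv(P)) / J(T(Arv(P)))` is `C(𝕋) ⊗ M_d(ℂ)`: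
there is a surjective star-algebra homomorphism `T(Arv(P)) → M_d(C(𝕋))` whose kernel is
exactly the Cuntz ideal. -/
theorem cuntzPimsner_of_irreducible_stochastic (hd : 0 < d)
    (hP : IsStochastic P) (hirr : StochIrreducible P) :
    ∃ Φ : ↥(ToeplitzAlg d P) →⋆ₐ[ℂ] Matrix (Fin d) (Fin d) C(Circle, ℂ),
      Function.Surjective Φ ∧
      ∀ T : ↥(ToeplitzAlg d P),
        Φ T = 0 ↔ InCuntzIdeal d P (T : FockH d P →L[ℂ] FockH d P) := by
  exact main_aux hd hP hirr
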